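/- arXiv:1005.1902 — 6 statements merged into one kernel-verified Lean document; each statement's English description precedes it below -/
import Mathlib

section
/- Let λ ≥ 2 and let θ ∈ S¹ be λ-renormalizable, with sign sequence ⟨s_n⟩. Then the set of critical times {n ≥ 1 : s_{n−1} = s_n} is infinite. -/
noncomputable section

abbrev F2 := FreeGroup Bool

def gh : F2 := FreeGroup.of true
def gv : F2 := FreeGroup.of false

def hmat (l : ℝ) : Matrix.SpecialLinearGroup (Fin 2) ℝ :=
  ⟨!![1, l; 0, 1], by norm_num [Matrix.det_fin_two_of]⟩

def vmat (l : ℝ) : Matrix.SpecialLinearGroup (Fin 2) ℝ :=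
  ⟨!![1, 0; l, 1], by norm_num [Matrix.det_fin_two_of]⟩

def rho (l : ℝ) : F2 →* Matrix.SpecialLinearGroup (Fin 2) ℝ :=
  FreeGroup.lift fun b => if b then hmat l else vmat l

def act (l : ℝ) (g : F2) (x : Fin 2 → ℝ) : Fin 2 → ℝ :=
  (rho l g).val.mulVec x

def nrm (x : Fin 2 → ℝ) : ℝ := Real.sqrt (x 0 ^ 2 + x 1 ^ 2)

def Circ : Set (Fin 2 → ℝ) := {x | nrm x = 1}

def gens : Set F2 := {gh, gv, gh⁻¹, gv⁻¹}

def ShrinkSet (l : ℝ) (g : F2) : Set (Fin 2 → ℝ) :=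
  {x | x ∈ Circ ∧ nrm (act l g x) < 1}

def ExpSet (l : ℝ) (g : F2) : Set (Fin 2 → ℝ) :=
  {x | x ∈ Circ ∧ 1 < nrm (act l g x)}

def IsGeodesicRay (g : ℕ → F2) : Prop :=
  g 0 = 1 ∧ (∀ n, g (n + 1) * (g n)⁻¹ ∈ gens) ∧ ∀ n, g (n + 2) * (g n)⁻¹ ≠ 1

def IsGeodesicSegment (g : ℕ → F2) (N : ℕ) : Prop :=
  g 0 = 1 ∧ (∀ n, n + 1 ≤ N → g (n + 1) * (g n)⁻¹ ∈ gens) ∧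
    ∀ n, n + 2 ≤ N → g (n + 2) * (g n)⁻¹ ≠ 1

def IsShrinkingSeq (l : ℝ) (g : ℕ → F2) (θ : Fin 2 → ℝ) : Prop :=
  ∀ ε : ℝ, 0 < ε → ∃ i : ℕ, nrm (act l (g i) θ) < ε

def Shrinkable (l : ℝ) (θ : Fin 2 → ℝ) : Prop :=
  ∀ ε : ℝ, 0 < ε → ∃ g : F2, nrm (act l g θ) < ε

def Renormalizable (l : ℝ) (θ : Fin 2 → ℝ) : Prop :=
  Shrinkable l θ ∧ ∀ k : F2, ∀ c : ℝ, act l (k * (gh * gv⁻¹) * k⁻¹) θ ≠ c • θ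

abbrev SP := Bool × Bool

def Quad (s : SP) : Set (Fin 2 → ℝ) :=
  {x | (if s.1 then 0 < x 0 else x 0 < 0) ∧ (if s.2 then 0 < x 1 else x 1 < 0)}

def letterSigma : Bool × Bool → SP → SP
  | (true, true), s => (s.2, s.2)
  | (false, true), s => (s.1, s.1)
  | (true, false), s => (!s.2, s.2)
  | (false, false), s => (s.1, !s.1)

def SigmaAct (g : F2) : SP → SP :=
  (FreeGroup.toWord g).foldr (fun w acc => letterSigma w ∘ acc) id

def gammaAut : F2 →* F2 := FreeGroup.lift fun b => if b then gv⁻¹ else gh⁻¹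

def rPerm (s : SP) : SP := (!s.2, s.1)

def rPermInv (s : SP) : SP := (s.2, !s.1)

def shiftRay (g : ℕ → F2) : ℕ → F2 := fun n => g (n + 1) * (g 1)⁻¹

def TailEquiv (g g' : ℕ → F2) : Prop :=
  ∃ m n : ℕ, shiftRay^[m] g = shiftRay^[n] g'

def seqPow (a : F2) : ℕ → F2 := fun n => a ^ n

def seqPer (a b : F2) : ℕ → F2 := fun n =>
  if n % 2 = 0 then (b * a) ^ (n / 2) else a * (b * a) ^ (n / 2)

def Cond1 (g : ℕ → F2) : Prop :=
  ¬ TailEquiv g (seqPow gh) ∧ ¬ TailEquiv g (seqPow gh⁻¹) ∧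
    ¬ TailEquiv g (seqPow gv) ∧ ¬ TailEquiv g (seqPow gv⁻¹)

def Cond2 (g : ℕ → F2) : Prop :=
  ¬ TailEquiv g (seqPer gh gv⁻¹) ∧ ¬ TailEquiv g (seqPer gh⁻¹ gv)

def adjSum {V : Type} (G : SimpleGraph V) (f : V → ℝ) (v : V) : ℝ :=
  ∑ᶠ w ∈ G.neighborSet v, f w

def BoundedValance {V : Type} (G : SimpleGraph V) : Prop :=
  ∃ D : ℕ, ∀ v, (G.neighborSet v).Finite ∧ (G.neighborSet v).ncard ≤ D

def BipartWith {V : Type} (G : SimpleGraph V) (A : Set V) : Prop :=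
  ∀ v w, G.Adj v w → (v ∈ A ↔ w ∉ A)

def Hop {V : Type} (G : SimpleGraph V) (A : Set V) (k : ℤ) (f : V → ℝ) : V → ℝ :=
  fun v => f v + (k : ℝ) * Set.indicator A (adjSum G f) v

def Vop {V : Type} (G : SimpleGraph V) (A : Set V) (k : ℤ) (f : V → ℝ) : V → ℝ :=
  fun v => f v + (k : ℝ) * Set.indicator Aᶜ (adjSum G f) v

def QuadV {V : Type} (A : Set V) (s : SP) : Set (V → ℝ) :=
  {f | (∀ v ∈ A, f v = 0 ∨ (if s.1 then 0 < f v else f v < 0)) ∧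
       ∀ v, v ∉ A → f v = 0 ∨ (if s.2 then 0 < f v else f v < 0)}

def valance {V : Type} (G : SimpleGraph V) (v : V) : ℕ := (G.neighborSet v).ncard

def evec {V : Type} (v : V) : V → ℝ := Set.indicator {v} 1

def InSpoke {V : Type} (G : SimpleGraph V) (x : V) : Prop :=
  ∃ k : ℕ, 2 ≤ k ∧ ∃ c : ℕ → V,
    (∀ i j, 1 ≤ i → i ≤ k → 1 ≤ j → j ≤ k → c i = c j → i = j) ∧
    valance G (c 1) = 1 ∧
    (∀ i, 2 ≤ i → i ≤ k - 1 →
      valance G (c i) = 2 ∧ G.Adj (c i) (c (i - 1)) ∧ G.Adj (c i) (c (i + 1))) ∧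
    ∃ i, 1 ≤ i ∧ i ≤ k ∧ x = c i

lemma act_mul' (l : ℝ) (a b : F2) (x : Fin 2 → ℝ) : act l (a * b) x = act l a (act l b x) := by
  simp only [act, map_mul, Matrix.SpecialLinearGroup.coe_mul, Matrix.mulVec_mulVec]

lemma act_h (l : ℝ) (y : Fin 2 → ℝ) : act l gh y = ![y 0 + l * y 1, y 1] := by
  ext i; fin_cases i <;> simp [act, rho, gh, hmat, Matrix.mulVec, dotProduct, Fin.sum_univ_two]

lemma act_v (l : ℝ) (y : Fin 2 → ℝ) : act l gv y = ![y 0, y 1 + l * y 0] := by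
  ext i; fin_cases i <;> simp [act, rho, gv, vmat, Matrix.mulVec, dotProduct, Fin.sum_univ_two]
  ring

lemma act_one' (l : ℝ) (y : Fin 2 → ℝ) : act l 1 y = y := by simp [act]

lemma act_smul' (l : ℝ) (g : F2) (c : ℝ) (y : Fin 2 → ℝ) : act l g (c • y) = c • act l g y := by
  simp [act, Matrix.mulVec_smul]

lemma act_hi (l : ℝ) (y : Fin 2 → ℝ) : act l gh⁻¹ y = ![y 0 - l * y 1, y 1] := by
  have h1 : act l gh ![y 0 - l * y 1, y 1] = y := by
    rw [act_h]; ext i; fin_cases i <;> simp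
  conv_lhs => rw [← h1]
  rw [← act_mul', inv_mul_cancel, act_one']

lemma act_vi (l : ℝ) (y : Fin 2 → ℝ) : act l gv⁻¹ y = ![y 0, y 1 - l * y 0] := by
  have h1 : act l gv ![y 0, y 1 - l * y 0] = y := by
    rw [act_v]; ext i; fin_cases i <;> simp
  conv_lhs => rw [← h1]
  rw [← act_mul', inv_mul_cancel, act_one']

def PP (l : ℝ) (y : Fin 2 → ℝ) : ℝ := y 0 ^ 2 + y 1 ^ 2 - l * |y 0 * y 1|

lemma real_pos (l a b : ℝ) (hl : 0 < l) (h : a * (a + l * b) < 0) :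
    (a + l * b) ^ 2 + b ^ 2 - l * |(a + l * b) * b| = a ^ 2 + b ^ 2 - l * |a * b| ∧
    0 < (a + l * b) * b := by
  have h1 : a * b < 0 := by
    have : l * (a * b) < 0 := by nlinarith [sq_nonneg a]
    by_contra hc
    push Not at hc
    nlinarith [mul_nonneg hl.le hc]
  have h2 : 0 < (a + l * b) * b := by
    rcases mul_neg_iff.1 h1 with ⟨ha, hb⟩ | ⟨ha, hb⟩
    · exact mul_pos_of_neg_of_neg (by by_contra hc; push Not at hc; nlinarith) hb
    · exact mul_pos (by by_contra hc; push Not at hc; nlinarith) hb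
  refine ⟨?_, h2⟩
  rw [abs_of_pos h2, abs_of_neg h1]; ring

lemma real_neg (l a b : ℝ) (hl : 0 < l) (h : a * (a - l * b) < 0) :
    (a - l * b) ^ 2 + b ^ 2 - l * |(a - l * b) * b| = a ^ 2 + b ^ 2 - l * |a * b| ∧
    0 < a * b := by
  have := real_pos l (a - l * b) b hl (by rw [sub_add_cancel, mul_comm]; exact h)
  rw [sub_add_cancel] at this
  exact ⟨this.1.symm, this.2⟩

lemma quad_ne {s : SP} {y : Fin 2 → ℝ} (h : y ∈ Quad s) : y 0 ≠ 0 ∧ y 1 ≠ 0 := by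
  obtain ⟨s1, s2⟩ := s
  cases s1 <;> cases s2 <;> simp [Quad] at h <;> exact ⟨by grind, by grind⟩

lemma quad_fst {s s' : SP} {y y' : Fin 2 → ℝ} (h : y ∈ Quad s) (h' : y' ∈ Quad s')
    (hne : s ≠ s') (h1 : y' 1 = y 1) : y 0 * y' 0 < 0 := by
  obtain ⟨s1, s2⟩ := s
  obtain ⟨t1, t2⟩ := s'
  cases s1 <;> cases s2 <;> cases t1 <;> cases t2 <;> simp [Quad] at h h' hne <;>
    first
    | (exfalso; linarith [h.2, h'.2])
    | exact mul_neg_of_neg_of_pos h.1 h'.1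
    | exact mul_neg_of_pos_of_neg h.1 h'.1

lemma quad_snd {s s' : SP} {y y' : Fin 2 → ℝ} (h : y ∈ Quad s) (h' : y' ∈ Quad s')
    (hne : s ≠ s') (h1 : y' 0 = y 0) : y 1 * y' 1 < 0 := by
  obtain ⟨s1, s2⟩ := s
  obtain ⟨t1, t2⟩ := s'
  cases s1 <;> cases s2 <;> cases t1 <;> cases t2 <;> simp [Quad] at h h' hne <;>
    first
    | (exfalso; linarith [h.1, h'.1])
    | exact mul_neg_of_neg_of_pos h.2 h'.2
    | exact mul_neg_of_pos_of_neg h.2 h'.2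

lemma step (l : ℝ) (hl : 0 < l) {s s' : SP} {y : Fin 2 → ℝ} {u : F2} (hu : u ∈ gens)
    (h : y ∈ Quad s) (h' : act l u y ∈ Quad s') (hne : s ≠ s') :
    PP l (act l u y) = PP l y ∧ (0 < y 0 * y 1 ∨ 0 < act l u y 0 * act l u y 1) := by
  simp only [gens, Set.mem_insert_iff, Set.mem_singleton_iff] at hu
  rcases hu with rfl | rfl | rfl | rfl
  · rw [act_h] at h' ⊢
    have h1 := quad_fst h h' hne (by simp)
    have := real_pos l (y 0) (y 1) hl (by simpa using h1)
    exact ⟨by simpa [PP] using this.1, Or.inr (by simpa using this.2)⟩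
  · rw [act_v] at h' ⊢
    have h1 := quad_snd h h' hne (by simp)
    have := real_pos l (y 1) (y 0) hl (by simpa using h1)
    refine ⟨?_, Or.inr (by simpa [mul_comm] using this.2)⟩
    have h2 := this.1
    simp only [PP, Matrix.cons_val_zero, Matrix.cons_val_one]
    rw [mul_comm (y 0) (y 1), mul_comm (y 0) (y 1 + l * y 0)]
    linarith
  · rw [act_hi] at h' ⊢
    have h1 := quad_fst h h' hne (by simp)
    have := real_neg l (y 0) (y 1) hl (by simpa using h1)
    exact ⟨by simpa [PP] using this.1, Or.inl this.2⟩
  · rw [act_vi] at h' ⊢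
    have h1 := quad_snd h h' hne (by simp)
    have := real_neg l (y 1) (y 0) hl (by simpa using h1)
    refine ⟨?_, Or.inl (by simpa [mul_comm] using this.2)⟩
    have h2 := this.1
    simp only [PP, Matrix.cons_val_zero, Matrix.cons_val_one]
    rw [mul_comm (y 0) (y 1), mul_comm (y 0) (y 1 - l * y 0)]
    linarith

lemma eig (l : ℝ) (y : Fin 2 → ℝ) (h : PP l y = 0) (hp : 0 < y 0 * y 1) :
    ∃ c : ℝ, act l (gh * gv⁻¹) y = c • y := by
  have hb : y 1 ≠ 0 := by rintro h; simp [h] at hp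
  rw [PP, abs_of_pos hp] at h
  refine ⟨(y 1 - l * y 0) / y 1, ?_⟩
  rw [act_mul', act_vi, act_h]
  ext i; fin_cases i
  · simp
    field_simp
    linear_combination l * h
  · simp
    field_simp

lemma PP_bound (l : ℝ) (hl : 0 < l) (y : Fin 2 → ℝ) : |PP l y| ≤ (1 + l) * nrm y ^ 2 := by
  rw [nrm, Real.sq_sqrt (by positivity), PP]
  have h1 : |y 0 * y 1| ≤ y 0 ^ 2 + y 1 ^ 2 := by
    rw [abs_le]; constructor <;> nlinarith [sq_nonneg (y 0 + y 1), sq_nonneg (y 0 - y 1)]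
  have h2 := mul_le_mul_of_nonneg_left h1 hl.le
  have h3 : 0 ≤ l * |y 0 * y 1| := by positivity
  rw [abs_le]; constructor <;> nlinarith [sq_nonneg (y 0), sq_nonneg (y 1)]

theorem stmt11 (l : ℝ) (hl : 2 ≤ l) (x : Fin 2 → ℝ) (hx : x ∈ Circ)
    (hren : Renormalizable l x)
    (g : ℕ → F2) (hg : IsGeodesicRay g) (hgs : IsShrinkingSeq l g x)
    (s : ℕ → SP) (hs : ∀ i, act l (g i) x ∈ Quad (s i)) :
    {n : ℕ | 1 ≤ n ∧ s (n - 1) = s n}.Infinite := by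
  intro hfin
  have hl0 : (0 : ℝ) < l := by linarith
  obtain ⟨N, hN⟩ := hfin.bddAbove
  have hne : ∀ n, N ≤ n → s n ≠ s (n + 1) := by
    intro n hn he
    have : n + 1 ≤ N := hN ⟨by omega, by simpa using he⟩
    omega
  have hstep : ∀ n, N ≤ n → PP l (act l (g (n + 1)) x) = PP l (act l (g n) x) ∧
      (0 < act l (g n) x 0 * act l (g n) x 1 ∨
        0 < act l (g (n + 1)) x 0 * act l (g (n + 1)) x 1) := by
    intro n hn
    have e : act l (g (n + 1)) x = act l (g (n + 1) * (g n)⁻¹) (act l (g n) x) := by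
      rw [← act_mul']; simp
    have h' := hs (n + 1)
    rw [e] at h' ⊢
    exact step l hl0 (hg.2.1 n) (hs n) h' (hne n hn)
  have hconst : ∀ n, N ≤ n → PP l (act l (g n) x) = PP l (act l (g N) x) := by
    intro n hn
    induction n, hn using Nat.le_induction with
    | base => rfl
    | succ n hn ih => rw [(hstep n hn).1, ih]
  have hpos : ∀ n, 0 < nrm (act l (g n) x) := by
    intro n
    have := (quad_ne (hs n)).1
    rw [nrm]
    apply Real.sqrt_pos.2
    positivity
  have hsmall : ∀ M : ℕ, ∀ ε : ℝ, 0 < ε → ∃ i, M ≤ i ∧ nrm (act l (g i) x) < ε := by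
    intro M
    induction M with
    | zero => intro ε he; obtain ⟨i, hi⟩ := hgs ε he; exact ⟨i, by omega, hi⟩
    | succ M ih =>
      intro ε he
      obtain ⟨i, hi, hi2⟩ := ih (min ε (nrm (act l (g M) x))) (lt_min he (hpos M))
      refine ⟨i, ?_, hi2.trans_le (min_le_left _ _)⟩
      rcases hi.eq_or_lt with rfl | h
      · exact absurd (hi2.trans_le (min_le_right _ _)) (lt_irrefl _)
      · exact h
  have hzero : PP l (act l (g N) x) = 0 := by
    by_contra hc
    have hc' := abs_pos.2 hc
    obtain ⟨i, hi, hi2⟩ := hsmall N (Real.sqrt (|PP l (act l (g N) x)| / (1 + l)))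
      (Real.sqrt_pos.2 (by positivity))
    have h1 := PP_bound l hl0 (act l (g i) x)
    rw [hconst i hi] at h1
    have h2 := (Real.lt_sqrt (hpos i).le).1 hi2
    rw [lt_div_iff₀ (by positivity)] at h2
    linarith
  have key : ∃ n, N ≤ n ∧ 0 < act l (g n) x 0 * act l (g n) x 1 := by
    rcases (hstep N le_rfl).2 with h | h
    · exact ⟨N, le_rfl, h⟩
    · exact ⟨N + 1, by omega, h⟩
  obtain ⟨n, hn, hp⟩ := key
  obtain ⟨c, hc⟩ := eig l _ ((hconst n hn).trans hzero) hp
  apply hren.2 (g n)⁻¹ c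
  rw [inv_inv, act_mul', act_mul', hc, act_smul', ← act_mul', inv_mul_cancel, act_one']
end
end

section
/- Let λ ≥ 2 and let θ ∈ S¹ be λ-renormalizable, with λ-shrinking sequence ⟨g_i⟩ and sign sequence ⟨s_i⟩. If t > 0 is a critical time, then s_t = Σ^{γ(g_t)}(s₀). -/
noncomputable section

def gamL (a : Bool × Bool) : Bool × Bool := (!a.1, !a.2)

theorem rho_mk (l : ℝ) (a : Bool × Bool) (g : F2) (x : Fin 2 → ℝ) :
    act l (FreeGroup.mk [a] * g) x 0 =
      (if a.1 then act l g x 0 + (if a.2 then l else -l) * act l g x 1 else act l g x 0) ∧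
    act l (FreeGroup.mk [a] * g) x 1 =
      (if a.1 then act l g x 1 else act l g x 1 + (if a.2 then l else -l) * act l g x 0) := by
  have h : act l (FreeGroup.mk [a] * g) x
      = (rho l (FreeGroup.mk [a])).val.mulVec (act l g x) := by
    simp only [act, map_mul, Matrix.mulVec_mulVec, Matrix.SpecialLinearGroup.coe_mul]
  rw [h]
  generalize act l g x = y
  have hr : rho l (FreeGroup.mk [a]) = if a.1 then (if a.2 then hmat l else (hmat l)⁻¹)
      else (if a.2 then vmat l else (vmat l)⁻¹) := by
    rcases a with ⟨_ | _, _ | _⟩ <;> simp [rho]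
  have hi : (hmat l)⁻¹ = hmat (-l) := by
    apply inv_eq_of_mul_eq_one_right
    ext i j
    rw [Matrix.SpecialLinearGroup.coe_mul, Matrix.mul_apply, Fin.sum_univ_two]
    fin_cases i <;> fin_cases j <;> simp [hmat]
  have vi : (vmat l)⁻¹ = vmat (-l) := by
    apply inv_eq_of_mul_eq_one_right
    ext i j
    rw [Matrix.SpecialLinearGroup.coe_mul, Matrix.mul_apply, Fin.sum_univ_two]
    fin_cases i <;> fin_cases j <;> simp [vmat]
  rw [hr, hi, vi]
  rcases a with ⟨_ | _, _ | _⟩ <;>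
    simp [hmat, vmat, Matrix.mulVec, dotProduct, Fin.sum_univ_two] <;> ring

theorem sig_step (L : List (Bool × Bool)) (a : Bool × Bool) (s : SP) :
    (a :: L).foldr (fun w acc => letterSigma w ∘ acc) id s =
      letterSigma a (L.foldr (fun w acc => letterSigma w ∘ acc) id s) := rfl

theorem gens_mk (u : F2) (hu : u ∈ gens) : ∃ a : Bool × Bool, u = FreeGroup.mk [a] := by
  rcases hu with h | h | h | h
  · exact ⟨(true, true), h⟩
  · exact ⟨(false, true), h⟩
  · exact ⟨(true, false), h⟩
  · exact ⟨(false, false), h⟩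

theorem gamma_mk (a : Bool × Bool) : gammaAut (FreeGroup.mk [a]) = FreeGroup.mk [gamL a] := by
  rcases a with ⟨_ | _, _ | _⟩ <;> simp [gammaAut, gamL, gh, gv, FreeGroup.of, FreeGroup.inv_mk, FreeGroup.invRev]

theorem norm_step (l : ℝ) (hl : 2 ≤ l) (a b : Bool × Bool) (hab : ¬ (a.1 = b.1 ∧ a.2 = !b.2))
    (X Y X' Y' X'' Y'' : ℝ)
    (h1 : X' = if a.1 then X + (if a.2 then l else -l) * Y else X)
    (h2 : Y' = if a.1 then Y else Y + (if a.2 then l else -l) * X)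
    (h3 : X'' = if b.1 then X' + (if b.2 then l else -l) * Y' else X')
    (h4 : Y'' = if b.1 then Y' else Y' + (if b.2 then l else -l) * X')
    (hN : X ^ 2 + Y ^ 2 ≤ X' ^ 2 + Y' ^ 2) :
    X' ^ 2 + Y' ^ 2 ≤ X'' ^ 2 + Y'' ^ 2 := by
  have hp : 0 < l := by linarith
  -- reduced condition
  have key : ∀ u v : ℝ, 0 ≤ l * (2 * u * v - l * v ^ 2) →
      0 ≤ u * v ∧ 2 * (u * v) ≤ l * u ^ 2 := by
    intro u v h
    have h' : 0 ≤ 2 * u * v - l * v ^ 2 := nonneg_of_mul_nonneg_right h hp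
    have hv : 2 * v ^ 2 ≤ l * v ^ 2 := by nlinarith [sq_nonneg v]
    have hu : 2 * u ^ 2 ≤ l * u ^ 2 := by nlinarith [sq_nonneg u]
    constructor
    · nlinarith [sq_nonneg v]
    · nlinarith [sq_nonneg (u - v)]
  rcases a with ⟨_ | _, _ | _⟩ <;> rcases b with ⟨_ | _, _ | _⟩ <;> simp at hab h1 h2 h3 h4
  all_goals rw [h3, h4]
  all_goals clear h3 h4
  · subst h1
    obtain rfl : Y = Y' + l * X' := by linarith
    obtain ⟨k1, k2⟩ := key (-Y') X' (by nlinarith)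
    nlinarith [mul_nonneg hp.le k1, mul_nonneg hp.le (sq_nonneg X'), mul_le_mul_of_nonneg_left k2 hp.le, sq_nonneg (l * X')]
  · subst h1
    obtain rfl : Y = Y' + l * X' := by linarith
    obtain ⟨k1, k2⟩ := key (-Y') X' (by nlinarith)
    nlinarith [mul_nonneg hp.le k1, mul_le_mul_of_nonneg_left k2 hp.le, sq_nonneg (l * Y')]
  · subst h1
    obtain rfl : Y = Y' + l * X' := by linarith
    obtain ⟨k1, k2⟩ := key (-Y') X' (by nlinarith)
    nlinarith [mul_nonneg hp.le k1, mul_le_mul_of_nonneg_left k2 hp.le, sq_nonneg (l * Y')]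
  · subst h1
    obtain rfl : Y = Y' - l * X' := by linarith
    obtain ⟨k1, k2⟩ := key Y' X' (by nlinarith)
    nlinarith [mul_nonneg hp.le k1, mul_le_mul_of_nonneg_left k2 hp.le, sq_nonneg (l * X')]
  · subst h1
    obtain rfl : Y = Y' - l * X' := by linarith
    obtain ⟨k1, k2⟩ := key Y' X' (by nlinarith)
    nlinarith [mul_nonneg hp.le k1, mul_le_mul_of_nonneg_left k2 hp.le, sq_nonneg (l * X')]
  · subst h1
    obtain rfl : Y = Y' - l * X' := by linarith
    obtain ⟨k1, k2⟩ := key Y' X' (by nlinarith)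
    nlinarith [mul_nonneg hp.le k1, mul_le_mul_of_nonneg_left k2 hp.le, sq_nonneg (l * Y')]
  · subst h2
    obtain rfl : X = X' + l * Y' := by linarith
    obtain ⟨k1, k2⟩ := key (-X') Y' (by nlinarith)
    nlinarith [mul_nonneg hp.le k1, mul_le_mul_of_nonneg_left k2 hp.le, sq_nonneg (l * X')]
  · subst h2
    obtain rfl : X = X' + l * Y' := by linarith
    obtain ⟨k1, k2⟩ := key (-X') Y' (by nlinarith)
    nlinarith [mul_nonneg hp.le k1, mul_le_mul_of_nonneg_left k2 hp.le, sq_nonneg (l * X')]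
  · subst h2
    obtain rfl : X = X' + l * Y' := by linarith
    obtain ⟨k1, k2⟩ := key (-X') Y' (by nlinarith)
    nlinarith [mul_nonneg hp.le k1, mul_le_mul_of_nonneg_left k2 hp.le, sq_nonneg (l * Y')]
  · subst h2
    obtain rfl : X = X' - l * Y' := by linarith
    obtain ⟨k1, k2⟩ := key X' Y' (by nlinarith)
    nlinarith [mul_nonneg hp.le k1, mul_le_mul_of_nonneg_left k2 hp.le, sq_nonneg (l * X')]
  · subst h2
    obtain rfl : X = X' - l * Y' := by linarith
    obtain ⟨k1, k2⟩ := key X' Y' (by nlinarith)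
    nlinarith [mul_nonneg hp.le k1, mul_le_mul_of_nonneg_left k2 hp.le, sq_nonneg (l * X')]
  · subst h2
    obtain rfl : X = X' - l * Y' := by linarith
    obtain ⟨k1, k2⟩ := key X' Y' (by nlinarith)
    nlinarith [mul_nonneg hp.le k1, mul_le_mul_of_nonneg_left k2 hp.le, sq_nonneg (l * Y')]

theorem quad_step (l : ℝ) (hl : 2 ≤ l) (a : Bool × Bool) (s s' : SP) (z z' : Fin 2 → ℝ)
    (hz : z ∈ Quad s) (hz' : z' ∈ Quad s')
    (h1 : z' 0 = if a.1 then z 0 + (if a.2 then l else -l) * z 1 else z 0)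
    (h2 : z' 1 = if a.1 then z 1 else z 1 + (if a.2 then l else -l) * z 0)
    (hN : z' 0 ^ 2 + z' 1 ^ 2 < z 0 ^ 2 + z 1 ^ 2) :
    (s.1 = xor a.2 s.2) ∧ (if a.1 then s'.2 = s.2 else s'.1 = s.1) := by
  have hp : 0 < l := by linarith
  replace hz : (if s.1 then 0 < z 0 else z 0 < 0) ∧ (if s.2 then 0 < z 1 else z 1 < 0) := hz
  replace hz' : (if s'.1 then 0 < z' 0 else z' 0 < 0) ∧ (if s'.2 then 0 < z' 1 else z' 1 < 0) := hz'
  rw [h1, h2] at hz' hN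
  clear h1 h2
  generalize z 0 = X at *
  generalize z 1 = Y at *
  rcases a with ⟨_ | _, _ | _⟩ <;> rcases s with ⟨_ | _, _ | _⟩ <;>
    rcases s' with ⟨_ | _, _ | _⟩ <;> simp at hz hz' hN ⊢
  all_goals
    obtain ⟨p1, p2⟩ := hz
    obtain ⟨q1, q2⟩ := hz'
    first
    | linarith
    | nlinarith [mul_pos_of_neg_of_neg p1 p2, mul_pos hp (mul_pos_of_neg_of_neg p1 p2), sq_nonneg (l * X), sq_nonneg (l * Y)]
    | nlinarith [mul_pos p1 p2, mul_pos hp (mul_pos p1 p2), sq_nonneg (l * X), sq_nonneg (l * Y)]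
    | nlinarith [mul_neg_of_pos_of_neg p1 p2, mul_neg_of_pos_of_neg hp (mul_neg_of_pos_of_neg p1 p2), sq_nonneg (l * X), sq_nonneg (l * Y)]
    | nlinarith [mul_neg_of_neg_of_pos p1 p2, mul_neg_of_pos_of_neg hp (mul_neg_of_neg_of_pos p1 p2), sq_nonneg (l * X), sq_nonneg (l * Y)]

theorem sign_step (a b : Bool × Bool) (hab : ¬ (a.1 = b.1 ∧ a.2 = !b.2)) (s s' : SP)
    (h1 : (s.1 = xor a.2 s.2) ∧ (if a.1 then s'.2 = s.2 else s'.1 = s.1))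
    (h2 : s'.1 = xor b.2 s'.2) : letterSigma (gamL b) s = s' := by
  revert a b s s'
  decide

theorem stmt12 (l : ℝ) (hl : 2 ≤ l) (x : Fin 2 → ℝ) (hx : x ∈ Circ)
    (hren : Renormalizable l x)
    (g : ℕ → F2) (hg : IsGeodesicRay g) (hgs : IsShrinkingSeq l g x)
    (s : ℕ → SP) (hs : ∀ i, act l (g i) x ∈ Quad (s i))
    (t : ℕ) (ht : 1 ≤ t) (hcrit : s (t - 1) = s t) :
    s t = SigmaAct (gammaAut (g t)) (s 0) := by
  obtain ⟨g0, g1, g2⟩ := hg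
  have ha : ∀ n, ∃ a : Bool × Bool, g (n + 1) = FreeGroup.mk [a] * g n := by
    intro n
    obtain ⟨a, h⟩ := gens_mk _ (g1 n)
    exact ⟨a, by rw [← h]; group⟩
  choose a ha using ha
  have hab : ∀ n, ¬ ((a n).1 = (a (n + 1)).1 ∧ (a n).2 = !(a (n + 1)).2) := by
    rintro n ⟨h1, h2⟩
    apply g2 n
    rw [show n + 2 = (n + 1) + 1 from rfl, ha (n + 1), ha n]
    have : FreeGroup.mk [a (n + 1)] = (FreeGroup.mk [a n])⁻¹ := by
      rw [FreeGroup.inv_mk, FreeGroup.invRev]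
      simp [h1, h2]
    rw [this]; group
  -- coordinates
  have hc := fun n => rho_mk l (a n) (g n) x
  simp only [← ha] at hc
  set z : ℕ → Fin 2 → ℝ := fun n => act l (g n) x with hz
  change ∀ n, z (n + 1) 0 = (if (a n).1 then z n 0 + (if (a n).2 then l else -l) * z n 1 else z n 0) ∧
    z (n + 1) 1 = (if (a n).1 then z n 1 else z n 1 + (if (a n).2 then l else -l) * z n 0) at hc
  change ∀ n, z n ∈ Quad (s n) at hs
  let N : ℕ → ℝ := fun n => z n 0 ^ 2 + z n 1 ^ 2
  have hpos : ∀ n, 0 < N n := by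
    intro n
    have h : z n 0 ≠ 0 := by
      have := (hs n).1
      split_ifs at this
      · exact this.ne'
      · exact this.ne
    have := sq_nonneg (z n 1)
    have : 0 < z n 0 ^ 2 := by positivity
    show 0 < z n 0 ^ 2 + z n 1 ^ 2
    linarith
  have hshr : ∀ n, N (n + 1) < N n := by
    intro n
    by_contra hcon
    push Not at hcon
    have hmono : ∀ k, N (n + k) ≤ N (n + k + 1) := by
      intro k
      induction k with
      | zero => exact hcon
      | succ k ih =>
        exact norm_step l hl (a (n + k)) (a (n + k + 1)) (hab _) _ _ _ _ _ _
          (hc (n + k)).1 (hc (n + k)).2 (hc (n + k + 1)).1 (hc (n + k + 1)).2 ih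
    have hge : ∀ k, N n ≤ N (n + k) := by
      intro k
      induction k with
      | zero => exact le_rfl
      | succ k ih => exact ih.trans (hmono k)
    have hmin : ∀ m, ∃ c > 0, ∀ k ≤ m, c ≤ N k := by
      intro m
      induction m with
      | zero => exact ⟨N 0, hpos 0, fun k hk => by obtain rfl : k = 0 := by omega
                                                   exact le_rfl⟩
      | succ m ih =>
        obtain ⟨c, hc0, hck⟩ := ih
        refine ⟨min c (N (m + 1)), lt_min hc0 (hpos _), fun k hk => ?_⟩
        rcases Nat.lt_or_ge m k with h | h
        · obtain rfl : k = m + 1 := by omega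
          exact min_le_right _ _
        · exact (min_le_left _ _).trans (hck k h)
    obtain ⟨c, hc0, hck⟩ := hmin n
    obtain ⟨i, hi⟩ := hgs (Real.sqrt c) (Real.sqrt_pos.2 hc0)
    have h1 : N i < c := (Real.sqrt_lt_sqrt_iff_of_pos hc0).1 hi
    rcases Nat.le_total i n with h | h
    · linarith [hck i h]
    · obtain ⟨k, rfl⟩ := Nat.exists_eq_add_of_le h
      linarith [hge k, hck n le_rfl]
  have hq := fun n => quad_step l hl (a n) (s n) (s (n + 1)) (z n) (z (n + 1)) (hs n) (hs (n + 1))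
    (hc n).1 (hc n).2 (hshr n)
  -- words
  have hw : ∀ n, ∃ L, gammaAut (g (n + 1)) = FreeGroup.mk (gamL (a n) :: L) ∧
      FreeGroup.IsReduced (gamL (a n) :: L) ∧
      (gamL (a n) :: L).foldr (fun w acc => letterSigma w ∘ acc) id (s 0) = s n := by
    intro n
    induction n with
    | zero =>
      refine ⟨[], ?_, ?_, ?_⟩
      · rw [ha, g0, mul_one, gamma_mk]
      · simp
      · rw [sig_step]
        have h := (hq 0).1
        revert h
        generalize a 0 = b
        generalize s 0 = r
        simp only [List.foldr, id]
        revert b r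
        decide
    | succ n ih =>
      obtain ⟨L, h1, h2, h3⟩ := ih
      refine ⟨gamL (a n) :: L, ?_, ?_, ?_⟩
      · rw [ha (n + 1), map_mul, h1, gamma_mk, FreeGroup.mul_mk]; rfl
      · rw [FreeGroup.isReduced_cons_cons]
        refine ⟨?_, h2⟩
        have := hab n
        revert this
        generalize a n = b
        generalize a (n + 1) = c
        revert b c
        decide
      · rw [sig_step, h3]
        exact sign_step (a n) (a (n + 1)) (hab n) _ _ (hq n) (hq (n + 1)).1
  obtain ⟨m, rfl⟩ : ∃ m, t = m + 1 := ⟨t - 1, by omega⟩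
  obtain ⟨L, h1, h2, h3⟩ := hw m
  rw [← hcrit, SigmaAct, h1, FreeGroup.toWord_mk, h2.reduce_eq, h3]
  rfl
end
end

section
/- Let 𝒢 be an infinite connected bipartite graph of bounded valance with bipartition 𝒱 = 𝒜 ⊔ ℬ. Let ⟨g_i⟩ be a geodesic ray in F₂, let s ∈ SP, and suppose the pair (g₁, s) belongs to {(h,++), (h,−−), (v,++), (v,−−), (h⁻¹,+−), (h⁻¹,−+), (v⁻¹,+−), (v⁻¹,−+)} (equivalently, ρ_λ(g₁)(Q_s) ⊆ Q_s for λ ≥ 2). Then for every i ≥ 0, Υ^{g_i}(Q̂_s) ⊆ Q̂_{s_i}, where s_i = Σ^{g_i}(s). -/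
noncomputable section

open Classical in
theorem aux_parent {V : Type} [Infinite V] (G : SimpleGraph V) (hconn : G.Connected)
    (hval : BoundedValance G) :
    ∃ p : V → V, (∀ v, G.Adj v (p v)) ∧ ∀ v, p (p v) ≠ v := by
  obtain ⟨D, hD⟩ := hval
  have key : ∀ v, ∃ y ∈ G.neighborSet v, ∀ᶠ x in (Filter.hyperfilter V : Filter V),
      G.dist y x + 1 = G.dist v x := by
    intro v
    have h1 : ∀ᶠ x in (Filter.hyperfilter V : Filter V),
        ∃ y ∈ G.neighborSet v, G.dist y x + 1 = G.dist v x := by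
      have h2 : ∀ᶠ x in (Filter.hyperfilter V : Filter V), x ≠ v := by
        apply Filter.hyperfilter_le_cofinite
        exact (Set.finite_singleton v).compl_mem_cofinite
      filter_upwards [h2] with x hx
      obtain ⟨q, hq⟩ := hconn.exists_walk_length_eq_dist v x
      cases q with
      | nil => exact absurd rfl hx
      | @cons _ y _ hadj q' =>
        refine ⟨y, hadj, ?_⟩
        have a1 := SimpleGraph.dist_le q'
        have a2 : G.dist v x ≤ G.dist v y + G.dist y x := hconn.dist_triangle
        have a3 : G.dist v y = 1 := SimpleGraph.dist_eq_one_iff_adj.2 hadj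
        simp only [SimpleGraph.Walk.length_cons] at hq
        omega
    have h3 : (⋃ y ∈ G.neighborSet v, {x | G.dist y x + 1 = G.dist v x}) ∈
        Filter.hyperfilter V := by
      refine Filter.mem_of_superset h1 ?_
      intro x hx
      obtain ⟨y, hy, hyx⟩ := hx
      simp only [Set.mem_iUnion]
      exact ⟨y, hy, hyx⟩
    obtain ⟨y, hy, h⟩ := (Ultrafilter.finite_biUnion_mem_iff (hD v).1).1 h3
    exact ⟨y, hy, h⟩
  choose p hp hp2 using key
  refine ⟨p, hp, fun v h => ?_⟩
  have e1 := hp2 v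
  have e2 := hp2 (p v)
  rw [h] at e2
  obtain ⟨x, hx1, hx2⟩ := (e1.and e2).exists
  omega

def sgb (b : Bool) : ℝ := if b then 1 else -1

open Classical in
def tauS {V : Type} (A : Set V) (t : SP) (v : V) : ℝ := if v ∈ A then sgb t.1 else sgb t.2

theorem aux_quad {V : Type} (A : Set V) (t : SP) (f : V → ℝ) :
    f ∈ QuadV A t ↔ ∀ v, 0 ≤ tauS A t v * f v := by
  have h1 : ∀ (b : Bool) (r : ℝ), (r = 0 ∨ (if b then 0 < r else r < 0)) ↔ 0 ≤ sgb b * r := by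
    intro b r
    cases b <;> simp [sgb, le_iff_eq_or_lt] <;> tauto
  unfold QuadV tauS
  simp only [Set.mem_setOf_eq, h1]
  constructor
  · rintro ⟨h, h'⟩ v
    by_cases hv : v ∈ A
    · simpa [hv] using h v hv
    · simpa [hv] using h' v hv
  · intro h
    refine ⟨fun v hv => ?_, fun v hv => ?_⟩
    · simpa [hv] using h v
    · simpa [hv] using h v

def clS {V : Type} (A : Set V) (w : Bool × Bool) : Set V := {v | v ∈ A ↔ w.1 = true}

open Classical in
def newF {V : Type} (A : Set V) (N : V → Finset V) (w : Bool × Bool) (f : V → ℝ) : V → ℝ :=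
  fun v => f v + if v ∈ clS A w then sgb w.2 * ∑ y ∈ N v, f y else 0

open Classical in
def InvS {V : Type} (A : Set V) (N : V → Finset V) (p : V → V) (w : Bool × Bool) (t : SP)
    (f : V → ℝ) : Prop :=
  (t.1 == t.2) = w.2 ∧ (∀ v, 0 ≤ tauS A t v * f v) ∧
    ∀ v ∈ clS A w, ∑ y ∈ (N v).erase (p v), tauS A t y * f y ≤ tauS A t v * f v

theorem aux_not_cl {V : Type} (A : Set V) (w : Bool × Bool) (t : SP) (f : V → ℝ)
    (N : V → Finset V) (v : V) (hv : v ∉ clS A w) :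
    tauS A (letterSigma w t) v * newF A N w f v = tauS A t v * f v := by
  obtain ⟨b, e⟩ := w
  by_cases hA : v ∈ A <;> cases b <;> cases e <;>
    simp_all [clS, newF, tauS, letterSigma]

theorem aux_cl {V : Type} (A : Set V) (w : Bool × Bool) (t : SP) (f : V → ℝ)
    (N : V → Finset V) (hN : ∀ v, ∀ y ∈ N v, (v ∈ A ↔ y ∉ A)) (v : V) (hv : v ∈ clS A w) :
    tauS A (letterSigma w t) v * newF A N w f v =
      sgb ((t.1 == t.2) == w.2) * (tauS A t v * f v) + ∑ y ∈ N v, tauS A t y * f y := by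
  have h : ∑ y ∈ N v, tauS A t y * f y =
      (if w.1 then sgb t.2 else sgb t.1) * ∑ y ∈ N v, f y := by
    rw [Finset.mul_sum]
    refine Finset.sum_congr rfl fun y hy => ?_
    have := hN v y hy
    obtain ⟨b, e⟩ := w
    by_cases hA : v ∈ A <;> cases b <;> simp_all [clS, tauS]
  rw [h]
  obtain ⟨b, e⟩ := w
  obtain ⟨t1, t2⟩ := t
  by_cases hA : v ∈ A <;> cases b <;> cases e <;> cases t1 <;> cases t2 <;>
    simp_all [clS, newF, tauS, letterSigma, sgb] <;> ring

theorem aux_plus {V : Type} (A : Set V) (w : Bool × Bool) (t : SP) (f : V → ℝ)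
    (N : V → Finset V) (hN : ∀ v, ∀ y ∈ N v, (v ∈ A ↔ y ∉ A)) (p : V → V)
    (ht : (t.1 == t.2) = w.2) (h0 : ∀ v, 0 ≤ tauS A t v * f v) :
    InvS A N p w (letterSigma w t) (newF A N w f) := by
  classical
  have hc : ∀ v ∈ clS A w, tauS A (letterSigma w t) v * newF A N w f v =
      tauS A t v * f v + ∑ y ∈ N v, tauS A t y * f y := by
    intro v hv
    rw [aux_cl A w t f N hN v hv]
    simp [ht, sgb]
  refine ⟨?_, ?_, ?_⟩
  · obtain ⟨b, e⟩ := w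
    obtain ⟨t1, t2⟩ := t
    revert b e t1 t2
    clear * -
    intro b e t1 t2 
    cases b <;> cases e <;> cases t1 <;> cases t2 <;> simp [letterSigma]
  · intro v
    by_cases hv : v ∈ clS A w
    · rw [hc v hv]
      exact add_nonneg (h0 v) (Finset.sum_nonneg fun y _ => h0 y)
    · rw [aux_not_cl A w t f N v hv]; exact h0 v
  · intro v hv
    rw [hc v hv]
    have : ∑ y ∈ (N v).erase (p v), tauS A (letterSigma w t) y * newF A N w f y =
        ∑ y ∈ (N v).erase (p v), tauS A t y * f y := by
      refine Finset.sum_congr rfl fun y hy => aux_not_cl A w t f N y ?_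
      have := hN v y (Finset.mem_of_mem_erase hy)
      simp only [clS, Set.mem_setOf_eq] at hv ⊢
      tauto
    rw [this]
    have h2 := Finset.sum_le_sum_of_subset_of_nonneg (f := fun y => tauS A t y * f y)
      (Finset.erase_subset (p v) (N v)) (fun y _ _ => h0 y)
    have := h0 v
    linarith

theorem aux_minus {V : Type} (A : Set V) (w w0 : Bool × Bool) (t : SP) (f : V → ℝ)
    (N : V → Finset V) (hN : ∀ v, ∀ y ∈ N v, (v ∈ A ↔ y ∉ A)) (p : V → V)
    (hsym : ∀ v, v ∈ N (p v)) (hpN : ∀ v, p v ∈ N v) (hpp : ∀ v, p (p v) ≠ v)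
    (h1 : w.1 = !w0.1) (h2 : w.2 = !w0.2) (hI : InvS A N p w0 t f) :
    InvS A N p w (letterSigma w t) (newF A N w f) := by
  classical
  obtain ⟨ht, h0, hd⟩ := hI
  have hc : ∀ v ∈ clS A w, tauS A (letterSigma w t) v * newF A N w f v =
      - (tauS A t v * f v) + ∑ y ∈ N v, tauS A t y * f y := by
    intro v hv
    rw [aux_cl A w t f N hN v hv]
    simp [ht, h2, sgb]
  have key : ∀ v ∈ clS A w, ∑ y ∈ (N v).erase (p v), tauS A t y * f y ≤
      - (tauS A t v * f v) + ∑ y ∈ N v, tauS A t y * f y := by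
    intro v hv
    have e1 := Finset.add_sum_erase (N v) (fun y => tauS A t y * f y) (hpN v)
    have hpc : p v ∈ clS A w0 := by
      have := hN v (p v) (hpN v)
      simp only [clS, Set.mem_setOf_eq, h1] at hv ⊢
      clear hd hc h0 hsym hpN hN
      generalize w0.1 = b at hv ⊢
      cases b <;> simp at hv ⊢ <;> tauto
    have e2 := hd _ hpc
    have e3 := Finset.single_le_sum (f := fun y => tauS A t y * f y) (fun y _ => h0 y)
      (Finset.mem_erase.2 ⟨(hpp v).symm, hsym v⟩)
    linarith
  refine ⟨?_, ?_, ?_⟩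
  · clear * -
    obtain ⟨b, e⟩ := w
    obtain ⟨t1, t2⟩ := t
    cases b <;> cases e <;> cases t1 <;> cases t2 <;> simp [letterSigma]
  · intro v
    by_cases hv : v ∈ clS A w
    · rw [hc v hv]
      exact le_trans (Finset.sum_nonneg fun y _ => h0 y) (key v hv)
    · rw [aux_not_cl A w t f N v hv]; exact h0 v
  · intro v hv
    rw [hc v hv]
    have : ∑ y ∈ (N v).erase (p v), tauS A (letterSigma w t) y * newF A N w f y =
        ∑ y ∈ (N v).erase (p v), tauS A t y * f y := by
      refine Finset.sum_congr rfl fun y hy => aux_not_cl A w t f N y ?_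
      have := hN v y (Finset.mem_of_mem_erase hy)
      simp only [clS, Set.mem_setOf_eq] at hv ⊢
      tauto
    rw [this]
    exact key v hv

theorem aux_gens (x : F2) (hx : x ∈ gens) : ∃ w : Bool × Bool, x = FreeGroup.mk [w] := by
  rcases hx with h | h | h | h
  · exact ⟨(true, true), h⟩
  · exact ⟨(false, true), h⟩
  · exact ⟨(true, false), h⟩
  · exact ⟨(false, false), h⟩

theorem aux_word (w : Bool × Bool) (x : F2)
    (h : ∀ w0 L, x.toWord = w0 :: L → ¬ (w.1 = w0.1 ∧ w.2 = !w0.2)) :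
    (FreeGroup.mk [w] * x).toWord = w :: x.toWord := by
  conv_lhs => rw [← FreeGroup.mk_toWord (x := x), FreeGroup.mul_mk, FreeGroup.toWord_mk]
  rw [List.singleton_append, FreeGroup.reduce.cons, FreeGroup.reduce_toWord]
  cases hx : x.toWord with
  | nil => rfl
  | cons w0 L => simp only [h w0 L hx, if_false]

theorem stmt14 {V : Type} [Countable V] [Infinite V]
    (G : SimpleGraph V) (A : Set V)
    (hconn : G.Connected) (hval : BoundedValance G) (hbip : BipartWith G A)
    (U : F2 →* Equiv.Perm (V → ℝ))
    (hUh : ∀ k : ℤ, ∀ f : V → ℝ, U (gh ^ k) f = Hop G A k f)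
    (hUv : ∀ k : ℤ, ∀ f : V → ℝ, U (gv ^ k) f = Vop G A k f)
    (g : ℕ → F2) (hg : IsGeodesicRay g) (s : SP)
    (hpair : (g 1, s) ∈ ({(gh, (true, true)), (gh, (false, false)),
      (gv, (true, true)), (gv, (false, false)),
      (gh⁻¹, (true, false)), (gh⁻¹, (false, true)),
      (gv⁻¹, (true, false)), (gv⁻¹, (false, true))} : Set (F2 × SP))) :
    ∀ i : ℕ, ∀ f ∈ QuadV A s, U (g i) f ∈ QuadV A (SigmaAct (g i) s) := by
  classical
  obtain ⟨p, hp, hpp⟩ := aux_parent G hconn hval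
  obtain ⟨D, hD⟩ := hval
  obtain ⟨g0, hstep, hred⟩ := hg
  let N : V → Finset V := fun v => (hD v).1.toFinset
  have hmem : ∀ v y, y ∈ N v ↔ G.Adj v y := fun v y => by simp [N]
  have hN : ∀ v, ∀ y ∈ N v, (v ∈ A ↔ y ∉ A) := fun v y hy => hbip v y ((hmem v y).1 hy)
  have hadj : ∀ f v, adjSum G f v = ∑ y ∈ N v, f y := fun f v =>
    finsum_mem_eq_finite_toFinset_sum _ (hD v).1
  have hU : ∀ (w : Bool × Bool) f, U (FreeGroup.mk [w]) f = newF A N w f := by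
    rintro ⟨b, e⟩ f
    have e1 : FreeGroup.mk [(true, true)] = gh ^ (1 : ℤ) := by rw [zpow_one]; rfl
    have e2 : FreeGroup.mk [(false, true)] = gv ^ (1 : ℤ) := by rw [zpow_one]; rfl
    have e3 : FreeGroup.mk [(true, false)] = gh ^ (-1 : ℤ) := by rw [zpow_neg_one]; rfl
    have e4 : FreeGroup.mk [(false, false)] = gv ^ (-1 : ℤ) := by rw [zpow_neg_one]; rfl
    cases b <;> cases e
    · rw [e4, hUv]; ext v
      by_cases hv : v ∈ A <;> simp [Vop, newF, clS, hv, sgb, hadj]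
    · rw [e2, hUv]; ext v
      by_cases hv : v ∈ A <;> simp [Vop, newF, clS, hv, sgb, hadj]
    · rw [e3, hUh]; ext v
      by_cases hv : v ∈ A <;> simp [Hop, newF, clS, hv, sgb, hadj]
    · rw [e1, hUh]; ext v
      by_cases hv : v ∈ A <;> simp [Hop, newF, clS, hv, sgb, hadj]
  intro i f hf
  rw [aux_quad] at hf
  have main : ∀ n, ∃ w : Bool × Bool, g (n + 1) = FreeGroup.mk [w] * g n ∧
      (g (n + 1)).toWord = w :: (g n).toWord ∧
      InvS A N p w (SigmaAct (g (n + 1)) s) (U (g (n + 1)) f) := by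
    intro n
    have hS : ∀ (m : ℕ) (w : Bool × Bool), (g (m + 1)).toWord = w :: (g m).toWord →
        SigmaAct (g (m + 1)) s = letterSigma w (SigmaAct (g m) s) := by
      intro m w h
      unfold SigmaAct
      rw [h]; rfl
    induction n with
    | zero =>
      have hw : ∃ w : Bool × Bool, g 1 = FreeGroup.mk [w] ∧ (s.1 == s.2) = w.2 := by
        simp only [Set.mem_insert_iff, Set.mem_singleton_iff, Prod.mk.injEq] at hpair
        rcases hpair with ⟨h, h'⟩ | ⟨h, h'⟩ | ⟨h, h'⟩ | ⟨h, h'⟩ | ⟨h, h'⟩ | ⟨h, h'⟩ | ⟨h, h'⟩ |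
          ⟨h, h'⟩ <;> rw [h, h']
        · exact ⟨(true, true), rfl, rfl⟩
        · exact ⟨(true, true), rfl, rfl⟩
        · exact ⟨(false, true), rfl, rfl⟩
        · exact ⟨(false, true), rfl, rfl⟩
        · exact ⟨(true, false), rfl, rfl⟩
        · exact ⟨(true, false), rfl, rfl⟩
        · exact ⟨(false, false), rfl, rfl⟩
        · exact ⟨(false, false), rfl, rfl⟩
      obtain ⟨w, hw, hs⟩ := hw
      have h1 : g (0 + 1) = FreeGroup.mk [w] * g 0 := by rw [g0, mul_one]; exact hw
      have h2 : (g (0 + 1)).toWord = w :: (g 0).toWord := by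
        rw [h1]; apply aux_word
        intro w0 L h
        rw [g0, FreeGroup.toWord_one] at h
        cases h
      refine ⟨w, h1, h2, ?_⟩
      have h3 : SigmaAct (g 0) s = s := by
        unfold SigmaAct
        rw [g0, FreeGroup.toWord_one]; rfl
      rw [hS 0 w h2, h3, zero_add, hw, hU]
      exact aux_plus A w s f N hN p hs hf
    | succ n ih =>
      obtain ⟨w0, i1, i2, i3⟩ := ih
      obtain ⟨w, hw⟩ := aux_gens _ (hstep (n + 1))
      have h1 : g (n + 1 + 1) = FreeGroup.mk [w] * g (n + 1) := by rw [← hw]; group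
      have hni : ¬ (w.1 = w0.1 ∧ w.2 = !w0.2) := by
        rintro ⟨a1, a2⟩
        apply hred n
        have : FreeGroup.mk [w] = (FreeGroup.mk [w0])⁻¹ := by
          rw [FreeGroup.inv_mk]
          have : w = (w0.1, !w0.2) := Prod.ext a1 a2
          rw [this]; rfl
        change g (n + 1 + 1) * _ = 1
        rw [h1, i1, this]; group
      have h2 : (g (n + 1 + 1)).toWord = w :: (g (n + 1)).toWord := by
        rw [h1]; apply aux_word
        intro w1 L h
        rw [i2] at h
        injection h with h _
        rw [← h]; exact hni
      refine ⟨w, h1, h2, ?_⟩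
      rw [hS _ w h2, h1, map_mul, Equiv.Perm.mul_apply, hU]
      by_cases hsame : w.2 = w0.2
      · exact aux_plus A w _ _ N hN p (i3.1.trans hsame.symm) i3.2.1
      · have b2 : w.2 = !w0.2 := by
          revert hsame; cases w.2 <;> cases w0.2 <;> simp
        have b1 : w.1 = !w0.1 := by
          have : ¬ w.1 = w0.1 := fun h => hni ⟨h, b2⟩
          revert this; cases w.1 <;> cases w0.1 <;> simp
        exact aux_minus A w w0 _ _ N hN p (fun v => (hmem _ _).2 (hp v).symm)
          (fun v => (hmem _ _).2 (hp v)) hpp b1 b2 i3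
  rw [aux_quad]
  cases i with
  | zero =>
    have h3 : SigmaAct (g 0) s = s := by
      unfold SigmaAct
      rw [g0, FreeGroup.toWord_one]; rfl
    rw [h3, g0, map_one]
    exact hf
  | succ n =>
    obtain ⟨w, _, _, h⟩ := main n
    exact h.2.1
end
end

section
/- Let 𝒢 be an infinite connected graph of bounded valance with vertex set 𝒱, and let f : 𝒱 → ℝ be non-negative. Then the following are equivalent: (1) there exists a non-negative g : 𝒱 → ℝ with A(g) = f; (2) for every finitely supported x : 𝒱 → ℝ such that A(x) is non-negative, one has ⟨f, x⟩ ≥ 0. -/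
noncomputable section

theorem aux_adj {V : Type} (G : SimpleGraph V) (hfin : ∀ v, (G.neighborSet v).Finite)
    (g : V → ℝ) (v : V) : adjSum G g v = ∑ w ∈ (hfin v).toFinset, g w := by
  unfold adjSum
  rw [finsum_mem_eq_finite_toFinset_sum _ (hfin v)]

theorem aux_cont {V : Type} (G : SimpleGraph V) (hfin : ∀ v, (G.neighborSet v).Finite) :
    Continuous (fun g : V → ℝ => adjSum G g) := by
  refine continuous_pi fun v => ?_
  simp only [aux_adj G hfin]
  fun_prop

theorem aux_le {V : Type} (G : SimpleGraph V) (hfin : ∀ v, (G.neighborSet v).Finite)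
    (g : V → ℝ) (hg : ∀ v, 0 ≤ g v) (v w : V) (h : G.Adj v w) : g w ≤ adjSum G g v := by
  rw [aux_adj G hfin]
  exact Finset.single_le_sum (f := g) (fun i _ => hg i) (by simpa using h)

theorem aux_closed {V : Type} [Countable V] (G : SimpleGraph V)
    (hfin : ∀ v, (G.neighborSet v).Finite) (n : V → V) (hn : ∀ w, G.Adj (n w) w) :
    IsClosed {f : V → ℝ | ∃ g : V → ℝ, (∀ v, 0 ≤ g v) ∧ adjSum G g = f} := by
  apply IsSeqClosed.isClosed
  intro F f hF hlim
  choose g hg0 hgF using hF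
  have hb : ∀ v, ∃ B, ∀ k, F k v ≤ B := by
    intro v
    obtain ⟨B, hB⟩ := ((tendsto_pi_nhds.1 hlim) v).bddAbove_range
    exact ⟨B, fun k => hB ⟨k, rfl⟩⟩
  choose B hB using hb
  have hK : IsCompact (Set.univ.pi fun w => Set.Icc (0:ℝ) (B (n w))) :=
    isCompact_univ_pi fun w => isCompact_Icc
  obtain ⟨a, ha, φ, hφ, hlim2⟩ := hK.isSeqCompact (x := g) (fun k w _ => ⟨hg0 k w, by
    have h1 := aux_le G hfin (g k) (hg0 k) (n w) w (hn w)
    rw [hgF k] at h1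
    exact h1.trans (hB _ _)⟩)
  refine ⟨a, fun v => (ha v trivial).1, ?_⟩
  have h1 := ((aux_cont G hfin).tendsto a).comp hlim2
  have h2 : Filter.Tendsto (F ∘ φ) Filter.atTop (nhds f) := hlim.comp hφ.tendsto_atTop
  refine tendsto_nhds_unique h1 (h2.congr fun k => ?_)
  simp [hgF]

theorem aux_dual {V : Type} (φ : (V → ℝ) →L[ℝ] ℝ) :
    ∃ x : V → ℝ, (Function.support x).Finite ∧ ∀ h : V → ℝ, φ h = ∑ᶠ v, x v * h v := by
  classical
  have h0 : φ ⁻¹' (Metric.ball 0 1) ∈ nhds (0 : V → ℝ) :=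
    φ.continuous.continuousAt.preimage_mem_nhds (by simpa using Metric.ball_mem_nhds (0:ℝ) one_pos)
  rw [nhds_pi, Filter.mem_pi] at h0
  obtain ⟨I, hI, t, ht, hsub⟩ := h0
  have hz : ∀ y : V → ℝ, (∀ v ∈ I, y v = 0) → φ y = 0 := by
    intro y hy
    by_contra hne
    have : (2 / φ y) • y ∈ φ ⁻¹' (Metric.ball 0 1) := by
      apply hsub
      intro v hv
      have := mem_of_mem_nhds (ht v)
      simpa [hy v hv] using this
    rw [Set.mem_preimage, map_smul, smul_eq_mul, div_mul_cancel₀ _ hne] at this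
    norm_num at this
  have hs : (Function.support fun v => φ (Pi.single v 1)) ⊆ I := by
    intro v hv
    by_contra hvI
    refine hv (hz _ fun w hw => ?_)
    have : w ≠ v := fun e => hvI (e ▸ hw)
    simp [this]
  refine ⟨fun v => φ (Pi.single v 1), hI.subset hs, fun h => ?_⟩
  rw [finsum_eq_sum_of_support_subset (s := hI.toFinset)]
  · have := hz (h - ∑ v ∈ hI.toFinset, h v • Pi.single v (1:ℝ)) (by
      intro v hv
      simp [Finset.sum_apply, Pi.single_apply, hv])
    rw [map_sub, map_sum, sub_eq_zero] at this
    rw [this]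
    refine Finset.sum_congr rfl fun v _ => ?_
    rw [map_smul, smul_eq_mul, mul_comm]
  · intro v hv
    have : v ∈ I := hs (fun e => hv (by simp only at e; simp [e]))
    simpa using this

theorem aux_symm {V : Type} (G : SimpleGraph V) (hfin : ∀ v, (G.neighborSet v).Finite)
    (x g : V → ℝ) (hx : (Function.support x).Finite) :
    ∑ᶠ v, x v * adjSum G g v = ∑ᶠ v, adjSum G x v * g v := by
  classical
  let S := hx.toFinset
  let T := S ∪ S.biUnion fun v => (hfin v).toFinset
  have e : ∀ y : V → ℝ, ∀ v, (∀ w, G.Adj v w → w ∉ T → y w = 0) →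
      adjSum G y v = ∑ w ∈ T, if G.Adj v w then y w else 0 := by
    intro y v h
    rw [aux_adj G hfin, ← Finset.sum_filter]
    symm
    apply Finset.sum_subset
    · intro w hw; simpa using (Finset.mem_filter.1 hw).2
    · intro w hw hw'
      have hw : G.Adj v w := by simpa using hw
      exact h w hw fun hT => hw' (Finset.mem_filter.2 ⟨hT, hw⟩)
  have hxS : ∀ v, v ∉ S → x v = 0 := by
    intro v hv; simpa [S] using hv
  rw [finsum_eq_sum_of_support_subset (s := S), finsum_eq_sum_of_support_subset (s := T)]
  · have hST : S ⊆ T := Finset.subset_union_left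
    have h1 : ∀ v ∈ S, x v * adjSum G g v = ∑ w ∈ T, if G.Adj v w then x v * g w else 0 := by
      intro v hv
      rw [e g v, Finset.mul_sum]
      · simp
      · intro w hvw hw
        refine absurd (Finset.mem_union_right _ (Finset.mem_biUnion.2 ⟨v, hv, ?_⟩)) hw
        simpa using hvw
    have h2 : ∀ v ∈ T, adjSum G x v * g v = ∑ w ∈ T, if G.Adj v w then x w * g v else 0 := by
      intro v hv
      rw [e x v, Finset.sum_mul]
      · simp
      · intro w hvw hw
        exact hxS w fun h => hw (hST h)
    rw [Finset.sum_congr rfl h1, Finset.sum_congr rfl h2]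
    rw [Finset.sum_subset hST, Finset.sum_comm]
    · simp only [G.adj_comm]
    · intro v _ hv
      simp [hxS v hv]
  · intro v hv
    by_contra hvT
    apply hv
    have : adjSum G x v = 0 := by
      rw [aux_adj G hfin]
      refine Finset.sum_eq_zero fun w hw => hxS w fun hwS => hvT ?_
      have hw : G.Adj v w := by simpa using hw
      refine Finset.mem_union_right _ (Finset.mem_biUnion.2 ⟨w, hwS, ?_⟩)
      simpa using hw.symm
    simp [this]
  · intro v hv
    by_contra hvS
    exact hv (by simp [hxS v hvS])

theorem stmt15 {V : Type} [Countable V] [Infinite V]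
    (G : SimpleGraph V) (hconn : G.Connected) (hval : BoundedValance G)
    (f : V → ℝ) (hf : ∀ v, 0 ≤ f v) :
    (∃ g : V → ℝ, (∀ v, 0 ≤ g v) ∧ ∀ v, adjSum G g v = f v) ↔
      ∀ x : V → ℝ, (Function.support x).Finite →
        (∀ v, 0 ≤ adjSum G x v) → 0 ≤ ∑ᶠ v, x v * f v := by
  classical
  obtain ⟨D, hD⟩ := hval
  have hfin := fun v => (hD v).1
  constructor
  · rintro ⟨g, hg, hgf⟩ x hx hpos
    have := aux_symm G hfin x g hx
    simp only [hgf] at this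
    rw [this]
    exact finsum_nonneg fun v => mul_nonneg (hpos v) (hg v)
  · intro H
    have hn : ∀ w, ∃ v, G.Adj v w := by
      intro w
      obtain ⟨v, hv⟩ := hconn.preconnected.exists_adj_of_nontrivial w
      exact ⟨v, hv.symm⟩
    choose n hn using hn
    have hcl := aux_closed G hfin n hn
    set C := {f : V → ℝ | ∃ g : V → ℝ, (∀ v, 0 ≤ g v) ∧ adjSum G g = f} with hC
    have hsmul : ∀ a : ℝ, 0 ≤ a → ∀ y ∈ C, a • y ∈ C := by
      rintro a ha y ⟨g, hg, rfl⟩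
      refine ⟨a • g, fun v => mul_nonneg ha (hg v), ?_⟩
      ext v
      simp [aux_adj G hfin, Finset.mul_sum]
    have hadd : ∀ y ∈ C, ∀ z ∈ C, y + z ∈ C := by
      rintro y ⟨g, hg, rfl⟩ z ⟨k, hk, rfl⟩
      refine ⟨g + k, fun v => add_nonneg (hg v) (hk v), ?_⟩
      ext v
      simp [aux_adj G hfin, Finset.sum_add_distrib]
    have hconv : Convex ℝ C := fun y hy z hz a b ha hb _ =>
      hadd _ (hsmul a ha y hy) _ (hsmul b hb z hz)
    by_contra hne
    have hfC : f ∉ C := by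
      rintro ⟨g, hg, hgf⟩
      exact hne ⟨g, hg, fun v => congrFun hgf v⟩
    obtain ⟨φ, u, h1, h2⟩ := geometric_hahn_banach_point_closed hconv hcl hfC
    have h0 : (0 : V → ℝ) ∈ C := ⟨0, fun _ => le_rfl, by ext v; simp [aux_adj G hfin]⟩
    have hu : u < 0 := by simpa using h2 0 h0
    have hφ : ∀ y ∈ C, 0 ≤ φ y := by
      intro y hy
      by_contra! hlt
      have := h2 _ (hsmul (u / φ y) (div_nonneg_of_nonpos hu.le hlt.le) y hy)
      rw [map_smul, smul_eq_mul, div_mul_cancel₀ _ hlt.ne] at this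
      exact lt_irrefl _ this
    obtain ⟨x, hx, hxφ⟩ := aux_dual φ
    have := H x hx (fun w => by
      have h3 : 0 ≤ φ (adjSum G (Pi.single w 1)) := hφ _ ⟨Pi.single w 1, fun v => by
        by_cases h : v = w
        · subst h; simp
        · simp [h], rfl⟩
      rw [hxφ, aux_symm G hfin x _ hx, finsum_eq_single _ w] at h3
      · simpa using h3
      · intro v hv
        simp [hv])
    rw [← hxφ] at this
    linarith
end
end

section
/- Let 𝒢 be an infinite connected graph of bounded valance with vertex set 𝒱. Then the set {A(f) : f ∈ ℝ^𝒱, f non-negative} is a closed subset of ℝ^𝒱 in the product topology (the topology of pointwise convergence). -/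
noncomputable section

theorem stmt16 {V : Type} [Countable V] [Infinite V]
    (G : SimpleGraph V) (hconn : G.Connected) (hval : BoundedValance G) :
    IsClosed {g : V → ℝ | ∃ f : V → ℝ, (∀ v, 0 ≤ f v) ∧ (fun v => adjSum G f v) = g} := by
  classical
  obtain ⟨D, hD⟩ := hval
  have hsum : ∀ (f : V → ℝ) v, adjSum G f v = ∑ w ∈ (hD v).1.toFinset, f w := by
    intro f v
    unfold adjSum
    exact finsum_mem_eq_finite_toFinset_sum f (hD v).1
  have hnb : ∀ v, ∃ w, G.Adj v w := fun v => hconn.preconnected.exists_adj_of_nontrivial v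
  choose n hn using hnb
  rw [isClosed_iff_ultrafilter]
  intro g u hu hS
  have key : ∀ h : V → ℝ, ∃ f : V → ℝ,
      h ∈ {g : V → ℝ | ∃ f : V → ℝ, (∀ v, 0 ≤ f v) ∧ (fun v => adjSum G f v) = g} →
      (∀ v, 0 ≤ f v) ∧ (fun v => adjSum G f v) = h := by
    intro h
    by_cases hh : h ∈ {g : V → ℝ | ∃ f : V → ℝ, (∀ v, 0 ≤ f v) ∧ (fun v => adjSum G f v) = g}
    · obtain ⟨f, hf⟩ := hh
      exact ⟨f, fun _ => hf⟩
    · exact ⟨0, fun h' => absurd h' hh⟩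
  choose F hF using key
  have hco : ∀ v, Filter.Tendsto (fun h : V → ℝ => h v) u (nhds (g v)) := fun v =>
    ((continuous_apply v).tendsto g).mono_left hu
  have hlim : ∀ v, ∃ y ∈ Set.Icc (0 : ℝ) (g (n v) + 1),
      Filter.Tendsto (fun h => F h v) u (nhds y) := by
    intro v
    have hev : ∀ᶠ h in (u : Filter (V → ℝ)), F h v ∈ Set.Icc (0 : ℝ) (g (n v) + 1) := by
      have h1 := (hco (n v)).eventually (eventually_le_nhds (lt_add_one (g (n v))))
      filter_upwards [h1, hS] with h h1 h2
      obtain ⟨h3, h4⟩ := hF h h2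
      refine ⟨h3 v, le_trans ?_ h1⟩
      rw [← congrFun h4 (n v)]
      simp only [hsum]
      apply Finset.single_le_sum (f := F h) (fun w _ => h3 w)
      simpa using (hn v).symm
    obtain ⟨y, hy, hle⟩ := isCompact_iff_ultrafilter_le_nhds.1
      (isCompact_Icc (a := (0 : ℝ)) (b := g (n v) + 1)) (u.map (fun h => F h v))
      (by rw [Filter.le_principal_iff]; exact hev)
    exact ⟨y, hy, hle⟩
  choose f hf hlimf using hlim
  refine ⟨f, fun v => (hf v).1, ?_⟩
  funext v
  rw [hsum]
  refine tendsto_nhds_unique (f := fun h => ∑ w ∈ (hD v).1.toFinset, F h w)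
    (l := (u : Filter (V → ℝ))) (tendsto_finset_sum _ fun w _ => hlimf w) ?_
  refine (hco v).congr' ?_
  filter_upwards [hS] with h h2
  rw [← hsum]
  exact (congrFun (hF h h2).2 v).symm
end
end

section
/- Let 𝒢 be an infinite connected bipartite graph of bounded valance with bipartition 𝒱_𝒢 = 𝒜 ⊔ ℬ, and let ℋ be an infinite connected subgraph of 𝒢, equipped with the induced bipartition. Let ⟨g_i⟩ be any geodesic ray in F₂. Then for every vertex v of ℋ, every vertex w of ℋ, and every i ≥ 0, |Υ_ℋ^{g_i}(e_v)(w)| ≤ |Υ_𝒢^{g_i}(e_v)(w)|, where e_v denotes the function assigning 1 to v and 0 to every other vertex, and Υ_ℋ, Υ_𝒢 denote the actions of F₂ on ℝ^{𝒱_ℋ} and ℝ^{𝒱_𝒢} associated to ℋ and 𝒢 respectively. -/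
noncomputable section

/-! helper material -/

def TL {V : Type} (G : SimpleGraph V) (hf : ∀ v, (G.neighborSet v).Finite) :
    (V → ℝ) →ₗ[ℝ] (V → ℝ) where
  toFun f := adjSum G f
  map_add' f g := by
    funext v
    simp only [adjSum, Pi.add_apply]
    exact finsum_mem_add_distrib (hf v)
  map_smul' c f := by
    funext v
    simp only [adjSum, Pi.smul_apply, smul_eq_mul, RingHom.id_apply]
    exact (mul_finsum_mem f c).symm

def us {M : Type} [AddCommGroup M] [Module ℝ M] (T : M →ₗ[ℝ] M) : ℕ → (M →ₗ[ℝ] M)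
  | 0 => LinearMap.id
  | 1 => T
  | (n + 2) => T ∘ₗ us T (n + 1) - us T n

def Good {V : Type} (f : V → ℝ) : Prop := 0 ≤ f ∧ f.support.Finite

def PosN {V : Type} (T : (V → ℝ) →ₗ[ℝ] (V → ℝ)) (n : ℕ) : Prop :=
  ∀ f : V → ℝ, Good f → 0 ≤ us T n f

lemma conv {V : Type} (T : (V → ℝ) →ₗ[ℝ] (V → ℝ)) (n : ℕ) :
    ∀ (_ : ∀ m < n, PosN T m) (d s : ℕ → V → ℝ) (_ : d 0 = 0) (_ : d 1 = s 0)
      (_ : ∀ j, d (j + 2) = T (d (j + 1)) - d j + s (j + 1))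
      (_ : ∀ j < n, Good (s j)), 0 ≤ d n := by
  induction n with
  | zero => intro _ d s h0 _ _ _; rw [h0]
  | succ n ih =>
    intro hp d s h0 h1 hr hs
    have key := ih (fun m hm => hp m (by omega)) (fun j => d (j + 1) - us T j (s 0))
      (fun j => s (j + 1)) (by simp [us, h1]) (by simp [us, hr, h0, h1])
      (by intro j
          simp only [us, LinearMap.sub_apply, LinearMap.comp_apply, map_sub]
          rw [hr (j + 1)]
          abel)
      (fun j hj => hs (j + 1) (by omega))
    have h2 := hp n (by omega) (s 0) (hs 0 (by omega))
    have := add_nonneg key h2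
    simpa using this

lemma TL_nonneg {V : Type} (G : SimpleGraph V) (hf) (f : V → ℝ) (h : 0 ≤ f) :
    0 ≤ TL G hf f := by
  intro v
  exact finsum_nonneg (fun i => finsum_nonneg (fun _ => h i))

lemma TL_fin {V : Type} (G : SimpleGraph V) (hf) (f : V → ℝ) (h : f.support.Finite) :
    (TL G hf f).support.Finite := by
  apply (h.biUnion (fun v _ => hf v)).subset
  intro w hw
  obtain ⟨v, hv, hne⟩ := exists_ne_zero_of_finsum_mem_ne_zero (show adjSum G f w ≠ 0 from hw)
  simp only [Set.mem_iUnion]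
  exact ⟨v, hne, SimpleGraph.Adj.symm hv⟩

lemma us_fin {V : Type} (G : SimpleGraph V) (hf) (f : V → ℝ) (h : f.support.Finite) (n : ℕ) :
    (us (TL G hf) n f).support.Finite := by
  induction n using Nat.twoStepInduction with
  | zero => exact h
  | one => exact TL_fin G hf f h
  | more n h1 h2 =>
    apply ((TL_fin G hf _ h2).union h1).subset
    simp only [us, LinearMap.sub_apply, LinearMap.comp_apply]
    exact Function.support_sub _ _

open Classical in
lemma evec_apply {V : Type} (v w : V) : evec v w = if w = v then 1 else 0 := by
  simp [evec, Set.indicator_apply]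

lemma evec_good {V : Type} (v : V) : Good (evec v) := by
  classical
  refine ⟨fun w => ?_, (Set.finite_singleton v).subset ?_⟩
  · rw [evec_apply]; split_ifs <;> simp
  · intro w hw
    by_contra h
    apply hw
    rw [evec_apply]
    exact if_neg h

open Classical in
lemma TL_evec {V : Type} (G : SimpleGraph V) (hf) (v w : V) :
    TL G hf (evec v) w = if G.Adj w v then 1 else 0 := by
  change (∑ᶠ z ∈ G.neighborSet w, evec v z) = _
  rw [finsum_eq_single _ v]
  · simp [finsum_eq_if, evec_apply]
  · intro z hz
    simp [evec_apply, hz]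

lemma posN_of_evec {V : Type} (T : (V → ℝ) →ₗ[ℝ] (V → ℝ)) (n : ℕ)
    (h : ∀ x, 0 ≤ us T n (evec x)) : PosN T n := by
  classical
  rintro f ⟨h0, hfin⟩
  have : f = ∑ x ∈ hfin.toFinset, f x • evec x := by
    funext w
    simp only [Finset.sum_apply, Pi.smul_apply, smul_eq_mul, evec_apply]
    simp
  rw [this, map_sum]
  apply Finset.sum_nonneg
  intro x _
  rw [map_smul]
  exact smul_nonneg (h0 x) (h x)

lemma ball_fin {V : Type} (G : SimpleGraph V) (hc : G.Connected)
    (hf : ∀ v, (G.neighborSet v).Finite) (x : V) (n : ℕ) : {y | G.dist x y ≤ n}.Finite := by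
  induction n with
  | zero =>
    apply (Set.finite_singleton x).subset
    intro y hy
    simp only [Set.mem_ofPred_eq, Nat.le_zero] at hy
    exact ((hc x y).dist_eq_zero_iff.mp hy).symm
  | succ n ih =>
    apply (ih.union (ih.biUnion (fun v _ => hf v))).subset
    intro y hy
    by_cases hxy : y = x
    · left; subst hxy; simp
    right
    obtain ⟨p, hp⟩ := hc.exists_walk_length_eq_dist y x
    cases p with
    | nil => exact absurd rfl hxy
    | cons h q =>
      rename_i z
      simp only [Set.mem_iUnion]
      refine ⟨z, ?_, SimpleGraph.Adj.symm h⟩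
      have h1 := SimpleGraph.dist_le q
      simp only [SimpleGraph.Walk.length_cons] at hp
      rw [Set.mem_ofPred_eq, SimpleGraph.dist_comm] at hy ⊢
      omega

lemma exists_path {V : Type} [Infinite V] (G : SimpleGraph V) (hc : G.Connected)
    (hf : ∀ v, (G.neighborSet v).Finite) (x : V) (N : ℕ) :
    ∃ p : ℕ → V, p 0 = x ∧ (∀ j < N, G.Adj (p j) (p (j + 1))) ∧
      ∀ j, j + 2 ≤ N → p (j + 2) ≠ p j := by
  obtain ⟨y, hy⟩ := (ball_fin G hc hf x N).exists_notMem
  simp only [Set.mem_ofPred_eq, not_le] at hy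
  obtain ⟨p, hp, hl⟩ := hc.exists_path_of_dist x y
  refine ⟨p.getVert, by simp, fun j hj => p.adj_getVert_succ (by omega), fun j hj h => ?_⟩
  have := hp.getVert_injOn (by simp; omega) (by simp; omega) h
  omega

lemma all_pos {V : Type} [Infinite V] (G : SimpleGraph V) (hc : G.Connected)
    (hf : ∀ v, (G.neighborSet v).Finite) (n : ℕ) : PosN (TL G hf) n := by
  classical
  induction n using Nat.strong_induction_on with
  | _ n ih =>
  apply posN_of_evec
  intro x
  obtain ⟨p, p0, padj, pne⟩ := exists_path G hc hf x n
  have key := conv (TL G hf) n ih (fun j => us (TL G hf) j (evec x) - evec (p j))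
    (fun j => TL G hf (evec (p j)) - evec (p (j + 1)) -
      (match j with | 0 => 0 | (k + 1) => evec (p k)))
    (by simp [us, p0]) (by simp [us, p0])
    (by intro j
        simp only [us, LinearMap.sub_apply, LinearMap.comp_apply, map_sub]
        abel)
    (by
      intro j hj
      constructor
      · intro w
        cases j with
        | zero =>
          have := padj 0 hj
          simp only [Pi.sub_apply, TL_evec, evec_apply, Pi.zero_apply]
          by_cases h : w = p (0 + 1)
          · subst h; simp [this.symm]
          · simp only [if_neg h]; split_ifs <;> simp
        | succ k =>
          have h1 := padj (k + 1) hj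
          have h2 := padj k (by omega)
          have h3 := pne k (by omega)
          simp only [Pi.sub_apply, TL_evec, evec_apply, Pi.zero_apply]
          by_cases h : w = p (k + 1 + 1)
          · subst h; simp [h1.symm, h3]
          · by_cases h' : w = p k
            · subst h'; simp [h2, Ne.symm h3]
            · simp only [if_neg h, if_neg h']; split_ifs <;> simp
      · have a1 := TL_fin G hf _ (evec_good (p j)).2
        have a2 := (evec_good (p (j + 1))).2
        apply ((a1.union a2).union
          (show (Function.support (match j with | 0 => 0 | (k + 1) => evec (p k)) :
            Set V).Finite from ?_)).subset
        · exact (Function.support_sub _ _).trans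
            (Set.union_subset_union_left _ (Function.support_sub _ _))
        · cases j with
          | zero => simp
          | succ k => exact (evec_good (p k)).2)
  have := add_nonneg key (evec_good (p n)).1
  simpa using this

section sub
variable {V VH : Type} (G : SimpleGraph V) (H : SimpleGraph VH) (emb : VH → V)
  (hemb : Function.Injective emb)
  (hsub : ∀ x y : VH, H.Adj x y → G.Adj (emb x) (emb y))
  (hf : ∀ v, (G.neighborSet v).Finite) (hfH : ∀ v, (H.neighborSet v).Finite)

def ext0 (f : VH → ℝ) : V → ℝ := Function.extend emb f 0

lemma ext0_emb (hemb : Function.Injective emb) (f : VH → ℝ) (y : VH) :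
    ext0 emb f (emb y) = f y := hemb.extend_apply _ _ _

lemma ext0_not (f : VH → ℝ) (w : V) (h : ¬ ∃ y, emb y = w) : ext0 emb f w = 0 :=
  Function.extend_apply' _ _ _ h

lemma ext0_good (hemb : Function.Injective emb) (f : VH → ℝ) (h : Good f) :
    Good (ext0 emb f) := by
  constructor
  · intro w
    by_cases hw : ∃ y, emb y = w
    · obtain ⟨y, rfl⟩ := hw
      rw [ext0_emb emb hemb]; exact h.1 y
    · rw [ext0_not emb f w hw]; simp
  · apply (h.2.image emb).subset
    intro w hw
    by_cases hw' : ∃ y, emb y = w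
    · obtain ⟨y, rfl⟩ := hw'
      rw [Function.mem_support, ext0_emb emb hemb] at hw
      exact ⟨y, hw, rfl⟩
    · exact absurd (ext0_not emb f w hw') hw

include hemb hsub in
lemma sub_nonneg' (f : VH → ℝ) (h : Good f) :
    0 ≤ TL G hf (ext0 emb f) - ext0 emb (TL H hfH f) := by
  intro w
  have hg := ext0_good emb hemb f h
  by_cases hw : ∃ y, emb y = w
  · obtain ⟨y, rfl⟩ := hw
    simp only [Pi.sub_apply, Pi.zero_apply, ext0_emb emb hemb, sub_nonneg]
    change (∑ᶠ z ∈ H.neighborSet y, f z) ≤ ∑ᶠ z ∈ G.neighborSet (emb y), ext0 emb f z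
    have e : (∑ᶠ z ∈ H.neighborSet y, f z) = ∑ᶠ z ∈ emb '' H.neighborSet y, ext0 emb f z := by
      rw [finsum_mem_image hemb.injOn]
      simp only [ext0_emb emb hemb]
    rw [e]
    have hss : emb '' H.neighborSet y ⊆ G.neighborSet (emb y) := by
      rintro _ ⟨z, hz, rfl⟩
      exact hsub y z hz
    rw [finsum_mem_eq_finite_toFinset_sum _ ((hfH y).image emb),
      finsum_mem_eq_finite_toFinset_sum _ (hf (emb y))]
    apply Finset.sum_le_sum_of_subset_of_nonneg
    · simpa using hss
    · intro i _ _
      exact hg.1 i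
  · rw [Pi.sub_apply, ext0_not emb _ w hw, sub_zero]
    exact TL_nonneg G hf _ hg.1 w

include hemb hsub in
lemma us_mono [Infinite V] [Infinite VH] (hc : G.Connected) (hcH : H.Connected)
    (x y : VH) (n : ℕ) :
    0 ≤ us (TL H hfH) n (evec x) y ∧
      us (TL H hfH) n (evec x) y ≤ us (TL G hf) n (evec (emb x)) (emb y) := by
  classical
  have hgood : ∀ j, Good (us (TL H hfH) j (evec x)) := fun j =>
    ⟨all_pos H hcH hfH j _ (evec_good x), us_fin H hfH _ (evec_good x).2 j⟩
  refine ⟨(hgood n).1 y, ?_⟩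
  have hextsub : ∀ f g : VH → ℝ, ext0 emb (f - g) = ext0 emb f - ext0 emb g := by
    intro f g
    funext w
    by_cases hw : ∃ y, emb y = w
    · obtain ⟨y, rfl⟩ := hw
      simp [ext0_emb emb hemb]
    · simp [ext0_not emb _ w hw]
  have he : ext0 emb (evec x) = evec (emb x) := by
    funext w
    by_cases hw : ∃ y, emb y = w
    · obtain ⟨y, rfl⟩ := hw
      simp [ext0_emb emb hemb, evec_apply, hemb.eq_iff]
    · rw [ext0_not emb _ w hw, evec_apply, if_neg]
      rintro rfl
      exact hw ⟨x, rfl⟩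
  have key := conv (TL G hf) n (fun m _ => all_pos G hc hf m)
    (fun j => us (TL G hf) j (evec (emb x)) - ext0 emb (us (TL H hfH) j (evec x)))
    (fun j => TL G hf (ext0 emb (us (TL H hfH) j (evec x))) -
      ext0 emb (TL H hfH (us (TL H hfH) j (evec x))))
    (by simp [us, he]) (by simp [us, he])
    (by intro j
        simp only [us, LinearMap.sub_apply, LinearMap.comp_apply, map_sub, hextsub]
        abel)
    (by
      intro j _
      refine ⟨sub_nonneg' G H emb hemb hsub hf hfH _ (hgood j), ?_⟩
      exact ((TL_fin G hf _ (ext0_good emb hemb _ (hgood j)).2).union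
        (ext0_good emb hemb _ ⟨TL_nonneg H hfH _ (hgood j).1,
          TL_fin H hfH _ (hgood j).2⟩).2).subset (Function.support_sub _ _))
  have := key (emb y)
  simp only [Pi.sub_apply, Pi.zero_apply, ext0_emb emb hemb, sub_nonneg] at this
  exact this

end sub

section cone
variable {M : Type} [AddCommGroup M] (T : M →+ M) (u : ℕ → M)

def CC : AddSubmonoid (M × M) :=
  AddSubmonoid.closure (Set.range (fun k => (u (k + 1), u k)) ∪ Set.range (fun k => (u k, 0)))

lemma CC1 (k : ℕ) : (u (k + 1), u k) ∈ CC u :=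
  AddSubmonoid.subset_closure (Or.inl ⟨k, rfl⟩)
lemma CC2 (k : ℕ) : (u k, (0 : M)) ∈ CC u :=
  AddSubmonoid.subset_closure (Or.inr ⟨k, rfl⟩)

lemma CC_map (φ : M × M →+ M × M) (h1 : ∀ k, φ (u (k + 1), u k) ∈ CC u)
    (h2 : ∀ k, φ (u k, 0) ∈ CC u) (p : M × M) (hp : p ∈ CC u) : φ p ∈ CC u := by
  have : CC u ≤ (CC u).comap φ := by
    apply (AddSubmonoid.closure_le).2
    rintro _ (⟨k, rfl⟩ | ⟨k, rfl⟩)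
    · exact h1 k
    · exact h2 k
  exact this hp

variable (h1 : u 1 = T (u 0)) (h2 : ∀ n, u (n + 2) = T (u (n + 1)) - u n)

include h1 h2 in
lemma CC_T (k : ℕ) : (T (u k), (0 : M)) ∈ CC u := by
  cases k with
  | zero => rw [← h1]; exact CC2 u 1
  | succ k =>
    have : T (u (k + 1)) = u (k + 2) + u k := by rw [h2]; abel
    rw [this]
    simpa using add_mem (CC2 u (k + 2)) (CC2 u k)

include h1 h2 in
lemma CC_rep (P Q : M) (h : (P, Q) ∈ CC u) : (P + T Q, Q) ∈ CC u := by
  refine CC_map u ((AddMonoidHom.fst M M + T.comp (AddMonoidHom.snd M M)).prod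
    (AddMonoidHom.snd M M)) ?_ ?_ (P, Q) h
  · intro k
    simpa using add_mem (CC1 u k) (CC_T T u h1 h2 k)
  · intro k
    simpa using CC2 u k

include h1 h2 in
lemma CC_sub (P Q : M) (h : (P, Q) ∈ CC u) : (T P - Q, P) ∈ CC u := by
  refine CC_map u ((T.comp (AddMonoidHom.fst M M) - AddMonoidHom.snd M M).prod
    (AddMonoidHom.fst M M)) ?_ ?_ (P, Q) h
  · intro k
    simpa [h2] using CC1 u (k + 1)
  · intro k
    cases k with
    | zero => simpa [h1] using CC1 u 0
    | succ k =>
      have := add_mem (CC1 u (k + 1)) (CC2 u k)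
      simpa [h2] using this

lemma CC_Q0 (P Q : M) (h : (P, Q) ∈ CC u) : (Q, 0) ∈ CC u := by
  refine CC_map u ((AddMonoidHom.snd M M).prod 0) ?_ ?_ (P, Q) h
  · intro k
    simpa using CC2 u k
  · intro k
    exact (CC u).zero_mem

include h1 h2 in
lemma CC_add (P Q : M) (h : (P, Q) ∈ CC u) : (T P + Q, P) ∈ CC u := by
  have a := CC_Q0 u P Q h
  have := add_mem (CC_sub T u h1 h2 P Q h) (add_mem a a)
  simpa using this

lemma CC_mem (S : AddSubmonoid M) (hS : ∀ k, u k ∈ S) (P Q : M) (h : (P, Q) ∈ CC u) :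
    P ∈ S ∧ Q ∈ S := by
  have : CC u ≤ S.prod S := by
    apply (AddSubmonoid.closure_le).2
    rintro _ (⟨k, rfl⟩ | ⟨k, rfl⟩)
    · exact ⟨hS _, hS _⟩
    · exact ⟨hS _, S.zero_mem⟩
  exact this h

end cone

def Zs {V : Type} (A : Set V) (b : Bool) : Set V := if b then A else Aᶜ

def Op {V : Type} (G : SimpleGraph V) (A : Set V) (b : Bool) (k : ℤ) (f : V → ℝ) : V → ℝ :=
  if b then Hop G A k f else Vop G A k f

lemma Op_apply {V : Type} (G : SimpleGraph V) (A : Set V) (b : Bool) (k : ℤ) (f : V → ℝ) (v : V) :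
    Op G A b k f v = f v + (k : ℝ) * Set.indicator (Zs A b) (adjSum G f) v := by
  cases b <;> simp [Op, Zs, Hop, Vop]

/-- `f` is described by `P` on the side `b` and by `Q` on the other side. -/
def Desc {V : Type} (A : Set V) (b : Bool) (e s : ℤ) (P Q f : V → ℝ) : Prop :=
  (∀ v ∈ Zs A b, f v = e * s * P v) ∧ ∀ v, v ∉ Zs A b → f v = s * Q v

lemma adj_side {V : Type} {G : SimpleGraph V} {A : Set V} (hb : BipartWith G A) (b : Bool)
    {v w : V} (h : G.Adj v w) : v ∈ Zs A b ↔ w ∉ Zs A b := by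
  have := hb v w h
  cases b <;> simp [Zs] <;> tauto

lemma Desc_rep {V : Type} {G : SimpleGraph V} {A : Set V} (hb : BipartWith G A) (hf)
    {b : Bool} {e s : ℤ} {P Q f : V → ℝ} (h : Desc A b e s P Q f) :
    Desc A b e s (P + TL G hf Q) Q (Op G A b e f) := by
  constructor
  · intro v hv
    have : adjSum G f v = (TL G hf ((s : ℝ) • Q)) v := by
      apply finsum_mem_congr rfl
      intro w hw
      exact h.2 w ((adj_side hb b hw).1 hv)
    rw [Op_apply, Set.indicator_of_mem hv, this, h.1 v hv, map_smul]
    simp only [Pi.smul_apply, Pi.add_apply, smul_eq_mul]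
    ring
  · intro v hv
    rw [Op_apply, Set.indicator_of_notMem hv, h.2 v hv]
    ring

lemma Zs_not {V : Type} (A : Set V) (b : Bool) (v : V) : v ∈ Zs A (!b) ↔ v ∉ Zs A b := by
  cases b <;> simp [Zs]

lemma Desc_sw {V : Type} {G : SimpleGraph V} {A : Set V} (hb : BipartWith G A) (hf)
    {b : Bool} {e s e' : ℤ} (he : e = 1 ∨ e = -1) (he' : e' = 1 ∨ e' = -1)
    {P Q f : V → ℝ} (h : Desc A b e s P Q f) :
    Desc A (!b) e' (e * s) (TL G hf P + (e * e' : ℝ) • Q) P (Op G A (!b) e' f) := by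
  constructor
  · intro v hv
    have hv' := (Zs_not A b v).1 hv
    have : adjSum G f v = (TL G hf ((e * s : ℝ) • P)) v := by
      apply finsum_mem_congr rfl
      intro w hw
      have := (adj_side hb b hw)
      exact h.1 w (by tauto)
    rw [Op_apply, Set.indicator_of_mem hv, this, h.2 v hv', map_smul]
    simp only [Pi.smul_apply, Pi.add_apply, smul_eq_mul]
    rcases he with rfl | rfl <;> rcases he' with rfl | rfl <;> push_cast <;> ring
  · intro v hv
    have hv' : v ∈ Zs A b := by
      rw [Zs_not] at hv; tauto
    rw [Op_apply, Set.indicator_of_notMem hv, h.1 v hv']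
    push_cast
    ring

lemma Desc_abs {V : Type} {A : Set V} {b : Bool} {e s : ℤ} (he : e = 1 ∨ e = -1)
    (hs : s = 1 ∨ s = -1) {P Q f : V → ℝ} (h : Desc A b e s P Q f) (v : V) :
    (v ∈ Zs A b → |f v| = |P v|) ∧ (v ∉ Zs A b → |f v| = |Q v|) := by
  refine ⟨fun hv => ?_, fun hv => ?_⟩
  · rw [h.1 v hv]
    rcases he with rfl | rfl <;> rcases hs with rfl | rfl <;> simp
  · rw [h.2 v hv]
    rcases hs with rfl | rfl <;> simp

def gen (b : Bool) (e : ℤ) : F2 := (if b then gh else gv) ^ e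

lemma gens_gen {a : F2} (h : a ∈ gens) : ∃ b e, (e = 1 ∨ e = -1) ∧ a = gen b e := by
  rcases h with rfl | rfl | rfl | rfl
  · exact ⟨true, 1, by simp, by simp [gen]⟩
  · exact ⟨false, 1, by simp, by simp [gen]⟩
  · exact ⟨true, -1, by simp, by simp [gen]⟩
  · exact ⟨false, -1, by simp, by simp [gen]⟩

lemma Desc_init {V : Type} (A : Set V) (b : Bool) (e : ℤ) (he : e = 1 ∨ e = -1) (x : V)
    (hx : x ∈ Zs A b) : Desc A b e e (evec x) 0 (evec x) := by
  classical
  constructor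
  · intro v _
    rcases he with rfl | rfl <;> simp
  · intro v hv
    rw [evec_apply, if_neg]
    · simp
    · rintro rfl; exact hv hx

theorem stmt18 {V VH : Type} [Countable V] [Infinite V] [Infinite VH]
    (G : SimpleGraph V) (A : Set V)
    (hGconn : G.Connected) (hGval : BoundedValance G) (hGbip : BipartWith G A)
    (H : SimpleGraph VH) (emb : VH → V) (hemb : Function.Injective emb)
    (hsub : ∀ x y : VH, H.Adj x y → G.Adj (emb x) (emb y))
    (hHconn : H.Connected)
    (UG : F2 →* Equiv.Perm (V → ℝ))
    (hUGh : ∀ k : ℤ, ∀ f : V → ℝ, UG (gh ^ k) f = Hop G A k f)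
    (hUGv : ∀ k : ℤ, ∀ f : V → ℝ, UG (gv ^ k) f = Vop G A k f)
    (UH : F2 →* Equiv.Perm (VH → ℝ))
    (hUHh : ∀ k : ℤ, ∀ f : VH → ℝ, UH (gh ^ k) f = Hop H (emb ⁻¹' A) k f)
    (hUHv : ∀ k : ℤ, ∀ f : VH → ℝ, UH (gv ^ k) f = Vop H (emb ⁻¹' A) k f)
    (g : ℕ → F2) (hg : IsGeodesicRay g) :
    ∀ (x y : VH) (i : ℕ),
      |UH (g i) (evec x) y| ≤ |UG (g i) (evec (emb x)) (emb y)| := by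
  have hf : ∀ v, (G.neighborSet v).Finite := by
    obtain ⟨D, hD⟩ := hGval
    exact fun v => (hD v).1
  have hfH : ∀ v, (H.neighborSet v).Finite := by
    intro v
    apply Set.Finite.of_finite_image _ hemb.injOn
    apply (hf (emb v)).subset
    rintro _ ⟨z, hz, rfl⟩
    exact hsub v z hz
  have hHbip : BipartWith H (emb ⁻¹' A) := fun v w h => hGbip _ _ (hsub v w h)
  have hZ : ∀ b y, y ∈ Zs (emb ⁻¹' A) b ↔ emb y ∈ Zs A b := by
    intro b y; cases b <;> simp [Zs]
  have hUG : ∀ b k f, UG (gen b k) f = Op G A b k f := by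
    intro b k f; cases b
    · simpa [gen, Op] using hUGv k f
    · simpa [gen, Op] using hUGh k f
  have hUH : ∀ b k f, UH (gen b k) f = Op H (emb ⁻¹' A) b k f := by
    intro b k f; cases b
    · simpa [gen, Op] using hUHv k f
    · simpa [gen, Op] using hUHh k f
  intro x y i
  obtain ⟨g0, g1, g2⟩ := hg
  choose lb le hle hl using fun n => gens_gen (g1 n)
  have hstep : ∀ n, g (n + 1) = gen (lb n) (le n) * g n := fun n => by
    rw [← hl n]; group
  have hnc : ∀ n, ¬ (lb (n + 1) = lb n ∧ le (n + 1) = - le n) := by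
    rintro n ⟨hb, he⟩
    apply g2 n
    rw [hstep (n + 1), hstep n, hb, he]
    cases lb n <;> simp [gen]
  let M := (V → ℝ) × (VH → ℝ)
  let T : M →+ M := ((TL G hf).prodMap (TL H hfH)).toAddMonoidHom
  let u : ℕ → M := fun n => (us (TL G hf) n (evec (emb x)), us (TL H hfH) n (evec x))
  have h1 : u 1 = T (u 0) := rfl
  have h2 : ∀ n, u (n + 2) = T (u (n + 1)) - u n := fun n => rfl
  have main : ∀ n, ∃ b e, (e = 1 ∨ e = -1) ∧ ¬ (lb n = b ∧ le n = -e) ∧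
      ∃ (P Q : M) (s : ℤ), (P, Q) ∈ CC u ∧ (s = 1 ∨ s = -1) ∧
        Desc A b e s P.1 Q.1 (UG (g n) (evec (emb x))) ∧
        Desc (emb ⁻¹' A) b e s P.2 Q.2 (UH (g n) (evec x)) := by
    intro n
    induction n with
    | zero =>
      obtain ⟨b, hb⟩ : ∃ b, emb x ∈ Zs A b := by
        by_cases h : emb x ∈ A
        · exact ⟨true, h⟩
        · exact ⟨false, h⟩
      refine ⟨b, le 0, hle 0, ?_, u 0, 0, le 0, CC2 u 0, hle 0, ?_, ?_⟩
      · rintro ⟨-, h⟩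
        rcases hle 0 with h' | h' <;> omega
      · rw [g0, map_one]
        exact Desc_init A b _ (hle 0) _ hb
      · rw [g0, map_one]
        exact Desc_init _ b _ (hle 0) _ ((hZ b x).2 hb)
    | succ n ih =>
      obtain ⟨b, e, he, hne, P, Q, s, hC, hs, dG, dH⟩ := ih
      refine ⟨lb n, le n, hle n, hnc n, ?_⟩
      have eG : UG (g (n + 1)) (evec (emb x)) =
          Op G A (lb n) (le n) (UG (g n) (evec (emb x))) := by
        rw [hstep, map_mul, Equiv.Perm.mul_apply, hUG]
      have eH : UH (g (n + 1)) (evec x) =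
          Op H (emb ⁻¹' A) (lb n) (le n) (UH (g n) (evec x)) := by
        rw [hstep, map_mul, Equiv.Perm.mul_apply, hUH]
      rw [eG, eH]
      by_cases hb : lb n = b
      · have hee : le n = e := by
          have : le n ≠ -e := fun h => hne ⟨hb, h⟩
          rcases hle n with h' | h' <;> rcases he with h | h <;> omega
        rw [hb, hee]
        exact ⟨P + T Q, Q, s, CC_rep T u h1 h2 P Q hC, hs, Desc_rep hGbip hf dG,
          Desc_rep hHbip hfH dH⟩
      · have hb' : lb n = !b := by
          revert hb; cases lb n <;> cases b <;> simp
        rw [hb']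
        refine ⟨T P + ((e : ℝ) * (le n : ℝ)) • Q, P, e * s, ?_, ?_,
          Desc_sw hGbip hf he (hle n) dG, Desc_sw hHbip hfH he (hle n) dH⟩
        · have p1 := CC_add T u h1 h2 P Q hC
          have p2 := CC_sub T u h1 h2 P Q hC
          rw [sub_eq_add_neg] at p2
          rcases he with rfl | rfl <;> rcases hle n with h | h <;> rw [h] <;> simpa
        · rcases he with rfl | rfl <;> rcases hs with rfl | rfl <;> simp
  obtain ⟨b, e, he, -, P, Q, s, hC, hs, dG, dH⟩ := main i
  let S : AddSubmonoid M :=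
    { carrier := {p | 0 ≤ p.2 y ∧ p.2 y ≤ p.1 (emb y)}
      zero_mem' := by simp
      add_mem' := by
        rintro p q ⟨a1, a2⟩ ⟨b1, b2⟩
        exact ⟨add_nonneg a1 b1, add_le_add a2 b2⟩ }
  have hS := CC_mem u S (fun k => us_mono G H emb hemb hsub hf hfH hGconn hHconn x y k) P Q hC
  have habs : ∀ p ∈ S, |p.2 y| ≤ |p.1 (emb y)| := by
    rintro p ⟨a1, a2⟩
    rw [abs_of_nonneg a1]
    exact a2.trans (le_abs_self _)
  by_cases hy : y ∈ Zs (emb ⁻¹' A) b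
  · rw [(Desc_abs he hs dH y).1 hy, (Desc_abs he hs dG (emb y)).1 ((hZ b y).1 hy)]
    exact habs P hS.1
  · rw [(Desc_abs he hs dH y).2 hy, (Desc_abs he hs dG (emb y)).2 (fun h => hy ((hZ b y).2 h))]
    exact habs Q hS.2
end
end
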